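/- arXiv:1402.6733 — 3 statements merged into one kernel-verified Lean document; each statement's English description precedes it below -/
import Mathlib

section
/- Let n ≥ 1 and let q = (q_1,...,q_n), a = (a_1,...,a_n), b = (b_1,...,b_n), c = (c_1,...,c_{n+1}) be sequences of indeterminates with each q_i nonzero. Define g̃_{k,ℓ}(t) = t^{-n} · ∏_{i=1}^{n+1}(1 + c_i t) · ∏_{i=1}^{k-1}(1 - b_i t) · ∏_{i=k+1}^{n}(1 + a_i t), and set m_{k,ℓ}(q_ℓ) = g̃_{k,ℓ}(q_ℓ) - g̃_{k,ℓ}(-q_ℓ^{-1}). Then det_{1≤k,ℓ≤n}(m_{k,ℓ}(q_ℓ)) = ∏_{1≤i<j≤n+1}(1 + c_i c_j) · ∏_{1≤i<j≤n}(b_i + a_j) · ∏_{i=1}^{n} q_i^{-n}(1 + q_i^2) · ∏_{1≤i<j≤n}(q_i - q_j)(1 + q_i q_j). -/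
open Finset

/-!
Put `u = -t⁻¹` and `p(t) = ∏ (1 + cᵢ t)`, so that `g̃_k(t) = t⁻ⁿ p(t) f_k(t)` with `f_k` of degree
less than `n`. Antisymmetrised under `t ↔ u`, each function `t⁻ⁿ p(t) tⁱ` with `i < n` becomes a
combination of the `n` functions `tˢ⁺¹ - uˢ⁺¹`, with coefficients depending only on `p`. The matrix
is therefore a product of three factors, involving only `(a, b)`, only `c` and only `q`:
* the coefficient matrix of the `f_k` is reduced to a smaller one of the same shape by subtracting
  consecutive rows;
* the matrix of the `tˢ⁺¹ - uˢ⁺¹` is, up to column factors, a Vandermonde matrix in `t + u`;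
* the middle factor does not depend on `q`, so its determinant may be computed at `q = (c₁, …, cₙ)`,
  where `p(u) = 0` and the product with the third factor is a scaled Vandermonde matrix. The
  divisions this requires are harmless for generic `c`, and an identity in `ℤ[c₁, …, cₙ₊₁]` results.
-/

open Polynomial

section TriangularProducts

variable {M : Type*} [CommMonoid M]

section Fin

variable {n : ℕ}

lemma prod_Iio_succ_eq_castSucc_mul (f : Fin (n + 1) → M) (k : Fin n) :
    ∏ i ∈ Iio k.succ, f i = (∏ i ∈ Iio k, f i.castSucc) * f k.castSucc := by
  have hIio : Iio k.succ = Iic k.castSucc := by ext; simp [Fin.le_castSucc_iff]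
  rw [hIio, Fin.prod_Iic_castSucc]
  exact (prod_Iio_mul_eq_prod_Iic (f := fun i => f i.castSucc) k).symm

lemma prod_Ioi_castSucc_eq_succ_mul (f : Fin (n + 1) → M) (k : Fin n) :
    ∏ i ∈ Ioi k.castSucc, f i = f k.succ * ∏ i ∈ Ioi k, f i.succ := by
  have hIoi : Ioi k.castSucc = Ici k.succ := by ext; simp [Fin.castSucc_lt_iff_succ_le]
  rw [hIoi, Fin.prod_Ici_succ]
  exact (mul_prod_Ioi_eq_prod_Ici (f := fun i => f i.succ) k).symm

lemma prod_Ioi_castSucc_eq_mul_last (f : Fin (n + 1) → M) (k : Fin n) :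
    ∏ i ∈ Ioi k.castSucc, f i = (∏ i ∈ Ioi k, f i.castSucc) * f (Fin.last n) := by
  simp_rw [← filter_lt_eq_Ioi, prod_filter, Fin.prod_univ_castSucc]
  simp [Fin.castSucc_lt_last]

lemma prod_prod_Ioi_eq_succ_mul (f : Fin (n + 1) → Fin (n + 1) → M) :
    ∏ i, ∏ j ∈ Ioi i, f i j =
      (∏ i : Fin n, f i.castSucc i.succ) * ∏ i : Fin n, ∏ j ∈ Ioi i, f i.castSucc j.succ := by
  rw [Fin.prod_univ_castSucc, ← prod_mul_distrib]
  simp [prod_Ioi_castSucc_eq_succ_mul, ← Fin.top_eq_last]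

lemma prod_prod_Ioi_eq_castSucc_mul_last (f : Fin (n + 1) → Fin (n + 1) → M) :
    ∏ i, ∏ j ∈ Ioi i, f i j =
      (∏ i : Fin n, ∏ j ∈ Ioi i, f i.castSucc j.castSucc) *
        ∏ i : Fin n, f i.castSucc (Fin.last n) := by
  rw [Fin.prod_univ_castSucc, ← prod_mul_distrib]
  simp [prod_Ioi_castSucc_eq_mul_last, ← Fin.top_eq_last]

end Fin

variable {α : Type*} [Fintype α] [LinearOrder α] [LocallyFiniteOrderTop α]
  [LocallyFiniteOrderBot α]

lemma prod_prod_eq_prod_diag_mul_prod_Ioi (f : α → α → M) :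
    ∏ i, ∏ j, f i j = (∏ i, f i i) * ∏ i, ∏ j ∈ Ioi i, f i j * f j i := by
  rw [prod_prod_Ioi_mul_eq_prod_prod_off_diag (fun i j => f j i), ← prod_mul_distrib]
  exact prod_congr rfl fun i _ => Fintype.prod_eq_mul_prod_compl i _

lemma prod_prod_Ioi_mul_eq_prod_pow (f : α → M) :
    ∏ i, ∏ j ∈ Ioi i, f i * f j = ∏ i, f i ^ (Fintype.card α - 1) := by
  refine (prod_prod_Ioi_mul_eq_prod_prod_off_diag fun _ j => f j).trans ?_
  simp [card_compl]

end TriangularProducts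

section MixedProd

variable {R : Type*} [CommRing R]

lemma natDegree_prod_le_card {S ι : Type*} [CommSemiring S] (s : Finset ι) {f : ι → S[X]}
    (hf : ∀ i ∈ s, (f i).natDegree ≤ 1) : (∏ i ∈ s, f i).natDegree ≤ #s := by
  simpa using (natDegree_prod_le s f).trans (sum_le_card_nsmul s _ 1 hf)

lemma natDegree_prod_one_add_C_mul_X_le {S ι : Type*} [CommSemiring S] (s : Finset ι)
    (x : ι → S) : (∏ i ∈ s, (1 + C (x i) * X)).natDegree ≤ #s :=
  natDegree_prod_le_card s fun i _ => by compute_degree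

lemma det_coeff_of_succ_eq_X_mul {n : ℕ} {f : Fin (n + 1) → R[X]} {r : Fin n → R[X]}
    (h : ∀ k, f k.succ = X * r k) :
    (Matrix.of fun k i : Fin (n + 1) => (f k).coeff i).det =
      (f 0).coeff 0 * (Matrix.of fun k i : Fin n => (r k).coeff i).det := by
  rw [Matrix.det_succ_column_zero, Fin.sum_univ_succ]
  simp [h, Matrix.submatrix]

lemma det_coeff_of_succ_sub_castSucc_eq_X_mul {n : ℕ} {f : Fin (n + 1) → R[X]}
    {r : Fin n → R[X]} (h : ∀ k, f k.succ - f k.castSucc = X * r k) :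
    (Matrix.of fun k i : Fin (n + 1) => (f k).coeff i).det =
      (f 0).coeff 0 * (Matrix.of fun k i : Fin n => (r k).coeff i).det := by
  let f' : Fin (n + 1) → R[X] := Fin.cons (f 0) fun k => X * r k
  have row_reduce : (Matrix.of fun k i : Fin (n + 1) => (f k).coeff i).det =
      (Matrix.of fun k i : Fin (n + 1) => (f' k).coeff i).det :=
    Matrix.det_eq_of_forall_row_eq_smul_add_pred (fun _ => 1) (fun _ => rfl)
      fun k i => by simp [f', ← h]
  rw [row_reduce, det_coeff_of_succ_eq_X_mul (f := f') fun _ => rfl]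
  rfl

lemma det_coeff_C_mul {n : ℕ} (x : Fin n → R) (r : Fin n → R[X]) :
    (Matrix.of fun k i : Fin n => (C (x k) * r k).coeff i).det =
      (∏ k, x k) * (Matrix.of fun k i : Fin n => (r k).coeff i).det := by
  simp_rw [coeff_C_mul]
  exact Matrix.det_mul_column x (Matrix.of fun k i : Fin n => (r k).coeff i)

/-- The polynomial `∏_{i < k} (1 - bᵢ X) · ∏_{i > k} (1 + aᵢ X)` occurring in `g̃_k`. -/
noncomputable def mixedProd {n : ℕ} (a b : Fin n → R) (k : Fin n) : R[X] :=
  (∏ i ∈ Iio k, (1 - C (b i) * X)) * ∏ i ∈ Ioi k, (1 + C (a i) * X)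

lemma coeff_zero_mixedProd {n : ℕ} (a b : Fin n → R) (k : Fin n) :
    (mixedProd a b k).coeff 0 = 1 := by
  simp [mixedProd, coeff_zero_eq_eval_zero, eval_prod]

lemma natDegree_mixedProd_lt {n : ℕ} (a b : Fin n → R) (k : Fin n) :
    (mixedProd a b k).natDegree < n := by
  have hb : (∏ i ∈ Iio k, (1 - C (b i) * X)).natDegree ≤ #(Iio k) :=
    natDegree_prod_le_card _ fun i _ => by compute_degree
  have ha : (∏ i ∈ Ioi k, (1 + C (a i) * X)).natDegree ≤ #(Ioi k) :=
    natDegree_prod_one_add_C_mul_X_le _ a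
  have hmul := natDegree_mul_le_of_le hb ha
  rw [Fin.card_Iio, Fin.card_Ioi] at hmul
  exact hmul.trans_lt (by omega)

lemma mixedProd_succ_sub_castSucc {n : ℕ} (a b : Fin (n + 1) → R) (k : Fin n) :
    mixedProd a b k.succ - mixedProd a b k.castSucc =
      X * (C (-(b k.castSucc + a k.succ)) *
        mixedProd (fun i => a i.succ) (fun i => b i.castSucc) k) := by
  simp only [mixedProd, prod_Iio_succ_eq_castSucc_mul, Fin.prod_Ioi_succ, Fin.prod_Iio_castSucc,
    prod_Ioi_castSucc_eq_succ_mul, map_neg, map_add]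
  ring

theorem det_coeff_mixedProd {n : ℕ} (a b : Fin n → R) :
    (Matrix.of fun k i : Fin n => (mixedProd a b k).coeff i).det =
      ∏ i, ∏ j ∈ Ioi i, -(b i + a j) := by
  induction n with
  | zero => simp
  | succ n ih =>
    rw [det_coeff_of_succ_sub_castSucc_eq_X_mul (mixedProd_succ_sub_castSucc a b),
      coeff_zero_mixedProd, one_mul, det_coeff_C_mul, ih, prod_prod_Ioi_eq_succ_mul]

end MixedProd

section SkewPow

variable {R : Type*} [CommRing R]

lemma isMonicOfDegree_dickson_two [Nontrivial R] (α : R) :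
    ∀ n : ℕ, IsMonicOfDegree (dickson 2 α n) n
  | 0 => by norm_num [isMonicOfDegree_zero_iff]
  | 1 => by simpa using isMonicOfDegree_X R
  | n + 2 => by
    have hlead := (isMonicOfDegree_X R).mul (isMonicOfDegree_dickson_two α (n + 1))
    have hdeg := (isMonicOfDegree_dickson_two α n).natDegree_eq
    rw [dickson_add_two]
    rw [show 1 + (n + 1) = n + 2 by ring] at hlead
    exact hlead.sub ((natDegree_C_mul_le _ _).trans_lt (by omega))

lemma pow_succ_sub_pow_succ_eq_eval_dickson (t u : R) :
    ∀ n : ℕ, t ^ (n + 1) - u ^ (n + 1) = (t - u) * (dickson 2 (t * u) n).eval (t + u)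
  | 0 => by norm_num
  | 1 => by
    rw [dickson_one, eval_X]
    ring
  | n + 2 => by
    have h₀ := pow_succ_sub_pow_succ_eq_eval_dickson t u n
    have h₁ := pow_succ_sub_pow_succ_eq_eval_dickson t u (n + 1)
    simp only [dickson_add_two, eval_sub, eval_mul, eval_X, eval_C]
    linear_combination (t + u) * h₁ - t * u * h₀

/-- The matrix with entries `tₗˢ⁺¹ - uₗˢ⁺¹`, where rows are indexed by `s` and columns by `l`.
The entries to be antisymmetrised under `t ↔ u` are expanded in its rows. -/
def skewPowMatrix {κ : Type*} (n : ℕ) (t u : κ → R) : Matrix (Fin n) κ R :=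
  Matrix.of fun s l => t l ^ (s.val + 1) - u l ^ (s.val + 1)

theorem det_skewPowMatrix {n : ℕ} {t u : Fin n → R} {α : R} (h : ∀ l, t l * u l = α) :
    (skewPowMatrix n t u).det =
      (∏ l, (t l - u l)) * ∏ i, ∏ j ∈ Ioi i, ((t j + u j) - (t i + u i)) := by
  nontriviality R
  have hfactor : (skewPowMatrix n t u).transpose = Matrix.of fun l s => (t l - u l) *
      (Matrix.of fun l s : Fin n => (dickson 2 α s).eval (t l + u l)) l s := by
    ext l s
    simp [skewPowMatrix, pow_succ_sub_pow_succ_eq_eval_dickson, h]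
  have hmonic := isMonicOfDegree_dickson_two α
  rw [← Matrix.det_transpose, hfactor, Matrix.det_mul_column,
    ← Matrix.det_eval_matrixOfPolynomials_eq_det_vandermonde (fun l => t l + u l)
      (fun s : Fin n => dickson 2 α s) (fun s => (hmonic s).natDegree_eq)
      (fun s => (hmonic s).monic),
    Matrix.det_vandermonde]

theorem det_skewPowMatrix_of_mul_eq_neg_one {n : ℕ} {t u : Fin n → R}
    (h : ∀ l, t l * u l = -1) :
    (skewPowMatrix n t u).det =
      (∏ i, (-u i) ^ n * (1 + t i ^ 2)) *
        ∏ i, ∏ j ∈ Ioi i, ((t j - t i) * (1 + t i * t j)) := by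
  have hsum (i j : Fin n) : (t j + u j) - (t i + u i) =
      (-u i * -u j) * ((t j - t i) * (1 + t i * t j)) := by
    linear_combination (u j - (t j - t i) * t j * u j) * h i + (t j - t i - u i) * h j
  have hdiff (i : Fin n) : (-u i) ^ n * (1 + t i ^ 2) = (t i - u i) * (-u i) ^ (n - 1) := by
    obtain ⟨m, rfl⟩ := Nat.exists_eq_add_one_of_ne_zero i.pos.ne'
    rw [Nat.add_sub_cancel, pow_succ]
    linear_combination (-(-u i) ^ m * t i) * h i
  have hpairs := prod_prod_Ioi_mul_eq_prod_pow fun i => -u i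
  rw [Fintype.card_fin] at hpairs
  simp_rw [det_skewPowMatrix h, hsum, hdiff]
  rw [prod_mul_distrib, ← hpairs, mul_assoc]
  simp_rw [← prod_mul_distrib]

end SkewPow

section SkewCoeff

variable {R : Type*} [CommRing R]

lemma pow_mul_pow_eq_pow_sub {M : Type*} [CommMonoid M] {x y : M} (h : x * y = 1) {m n : ℕ}
    (hmn : m ≤ n) : x ^ n * y ^ m = x ^ (n - m) := by
  rw [← pow_sub_mul_pow x hmn, mul_assoc, pow_mul_pow_eq_one m h, mul_one]

lemma pow_mul_eval_eq_sum {S : Type*} [CommSemiring S] {v t : S} (h : v * t = 1) {d m : ℕ}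
    {p : S[X]} (hp : p.natDegree ≤ d + m) :
    v ^ d * p.eval t = ∑ s ∈ range m, p.coeff (d + 1 + s) * t ^ (s + 1) + p.coeff d +
      ∑ s ∈ range d, p.coeff (d - 1 - s) * v ^ (s + 1) := by
  have hhigh (s : ℕ) : v ^ d * t ^ (d + 1 + s) = t ^ (s + 1) := by
    rw [mul_comm, pow_mul_pow_eq_pow_sub (mul_comm v t ▸ h) (by omega)]
    congr 1
    omega
  have hlow : ∑ s ∈ range d, v ^ d * (p.coeff s * t ^ s) =
      ∑ s ∈ range d, p.coeff (d - 1 - s) * v ^ (s + 1) := by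
    rw [← sum_range_reflect]
    refine sum_congr rfl fun s hmem => ?_
    have hs : s < d := mem_range.mp hmem
    rw [mul_left_comm, pow_mul_pow_eq_pow_sub h (by omega)]
    congr 2
    omega
  rw [eval_eq_sum_range' (n := d + 1 + m) (by omega), sum_range_add, sum_range_succ, mul_add,
    mul_add, mul_sum, mul_sum, hlow]
  simp only [mul_left_comm (v ^ d), hhigh, pow_mul_pow_eq_one d h]
  ring

/-- The matrix expressing the antisymmetrisations of `t^(i - n) * p(t)`, `0 ≤ i < n`, under
`t ↔ -t⁻¹` in terms of the functions `t^(s + 1) - (-t⁻¹)^(s + 1)`, `0 ≤ s < n`, for a polynomial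
`p` of degree at most `n + 1`. The `if` discards the truncated subtraction when `n - i - 1 < s`. -/
noncomputable def skewCoeffMatrix (n : ℕ) (p : R[X]) : Matrix (Fin n) (Fin n) R :=
  Matrix.of fun i s => p.coeff (n - i + 1 + s) +
    (-1) ^ s.val * if s.val < n - i then p.coeff (n - i - 1 - s) else 0

lemma skewCoeffMatrix_mul_skewPowMatrix_apply {κ : Type*} {n : ℕ} {p : R[X]}
    (hp : p.natDegree ≤ n + 1) {t u : κ → R} (h : ∀ l, t l * u l = -1) (i : Fin n) (l : κ) :
    (skewCoeffMatrix n p * skewPowMatrix n t u) i l =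
      (-u l) ^ (n - i) * p.eval (t l) - (-t l) ^ (n - i) * p.eval (u l) := by
  have hlow (w : R) : ∑ s ∈ range n,
      (if s < n - i then p.coeff (n - i - 1 - s) else 0) * w ^ (s + 1) =
        ∑ s ∈ range (n - i), p.coeff (n - i - 1 - s) * w ^ (s + 1) := by
    simp_rw [ite_mul, zero_mul, ← sum_filter]
    congr 1
    ext
    simp only [mem_filter, mem_range]
    omega
  have hdeg : p.natDegree ≤ n - i + n := by omega
  rw [pow_mul_eval_eq_sum (by linear_combination -h l) hdeg,
    pow_mul_eval_eq_sum (by linear_combination -h l) hdeg, ← hlow, ← hlow,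
    add_right_comm, add_right_comm _ (p.coeff _), add_sub_add_right_eq_sub,
    ← sum_add_distrib, ← sum_add_distrib, ← sum_sub_distrib, ← Fin.sum_univ_eq_sum_range,
    Matrix.mul_apply]
  refine sum_congr rfl fun s _ => ?_
  simp only [skewCoeffMatrix, skewPowMatrix, Matrix.of_apply, neg_pow (t l), neg_pow (u l)]
  ring

theorem of_antisymm_eval_eq_mul {ι κ : Type*} {n : ℕ} {p : R[X]} (hp : p.natDegree ≤ n + 1)
    {f : ι → R[X]} (hf : ∀ k, (f k).natDegree < n) {t u : κ → R} (h : ∀ l, t l * u l = -1) :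
    (Matrix.of fun k l => (-u l) ^ n * (p * f k).eval (t l) -
        (-t l) ^ n * (p * f k).eval (u l)) =
      (Matrix.of fun k (i : Fin n) => (f k).coeff i) *
        (skewCoeffMatrix n p * skewPowMatrix n t u) := by
  have hexpand (k : ι) {v x : R} (hvx : v * x = 1) : v ^ n * (p * f k).eval x =
      ∑ i : Fin n, (f k).coeff i * (v ^ (n - i) * p.eval x) := by
    rw [eval_mul, eval_eq_sum_range' (hf k), mul_sum, mul_sum,
      ← Fin.sum_univ_eq_sum_range fun i => v ^ n * (eval x p * ((f k).coeff i * x ^ i))]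
    refine sum_congr rfl fun i _ => ?_
    rw [← pow_mul_pow_eq_pow_sub hvx i.is_le']
    ring
  ext k l
  simp only [Matrix.mul_apply (M := Matrix.of _), Matrix.of_apply,
    skewCoeffMatrix_mul_skewPowMatrix_apply hp h, mul_sub, sum_sub_distrib]
  rw [hexpand k (by linear_combination -h l), hexpand k (by linear_combination -h l)]

lemma det_skewCoeffMatrix_mul_det_skewPowMatrix_of_isRoot {n : ℕ} {p : R[X]}
    (hp : p.natDegree ≤ n + 1) {t u : Fin n → R} (h : ∀ l, t l * u l = -1)
    (hu : ∀ l, p.IsRoot (u l)) :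
    (skewCoeffMatrix n p).det * (skewPowMatrix n t u).det =
      (∏ l, (-u l) ^ n * p.eval (t l)) * ∏ i, ∏ j ∈ Ioi i, (t j - t i) := by
  have hmul : (skewCoeffMatrix n p * skewPowMatrix n t u).transpose =
      Matrix.of fun l i => ((-u l) ^ n * p.eval (t l)) * Matrix.vandermonde t l i := by
    ext l i
    rw [Matrix.transpose_apply, skewCoeffMatrix_mul_skewPowMatrix_apply hp h, hu l,
      ← pow_mul_pow_eq_pow_sub (y := t l) (by linear_combination -h l) i.is_le']
    simp only [mul_zero, sub_zero, Matrix.of_apply, Matrix.vandermonde_apply]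
    ring
  rw [← Matrix.det_mul, ← Matrix.det_transpose, hmul, Matrix.det_mul_column,
    Matrix.det_vandermonde]

lemma det_skewCoeffMatrix_mul_prod {K : Type*} [Field K] {n : ℕ} {c : Fin n → K}
    (hc : ∀ i, c i ≠ 0) (hinj : Function.Injective c) (hcc : ∀ i j, 1 + c i * c j ≠ 0)
    {r : K[X]} (hr : r.natDegree ≤ 1) :
    (skewCoeffMatrix n (r * ∏ i, (1 + C (c i) * X))).det =
      (∏ i, r.eval (c i)) * ∏ i, ∏ j ∈ Ioi i, (1 + c i * c j) := by
  set p : K[X] := r * ∏ i, (1 + C (c i) * X) with hp_def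
  have hp : p.natDegree ≤ n + 1 := by
    simpa [add_comm] using natDegree_mul_le_of_le hr (natDegree_prod_one_add_C_mul_X_le univ c)
  have hmul (l : Fin n) : c l * -(c l)⁻¹ = -1 := by rw [mul_neg, mul_inv_cancel₀ (hc l)]
  have hroot (l : Fin n) : p.IsRoot (-(c l)⁻¹) := by
    rw [IsRoot, hp_def, eval_mul, eval_prod, prod_eq_zero (mem_univ l) (by simp [hc l]), mul_zero]
  have heval : ∏ l, p.eval (c l) = (∏ l, r.eval (c l)) *
      ((∏ l, (1 + c l ^ 2)) * (∏ i, ∏ j ∈ Ioi i, (1 + c i * c j)) ^ 2) := by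
    simp only [hp_def, eval_mul, eval_prod, eval_add, eval_one, eval_C, eval_X, prod_mul_distrib]
    rw [prod_prod_eq_prod_diag_mul_prod_Ioi]
    simp_rw [sq, ← prod_mul_distrib, mul_comm (c _) (c _)]
  have hdet := det_skewCoeffMatrix_mul_det_skewPowMatrix_of_isRoot hp hmul hroot
  rw [det_skewPowMatrix_of_mul_eq_neg_one hmul] at hdet
  simp only [prod_mul_distrib, heval] at hdet
  have hpow_ne : ∏ l, (- -(c l)⁻¹) ^ n ≠ 0 :=
    prod_ne_zero_iff.mpr fun l _ => pow_ne_zero n (by simpa using hc l)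
  have hdiag_ne : ∏ l, (1 + c l ^ 2) ≠ 0 :=
    prod_ne_zero_iff.mpr fun l _ => sq (c l) ▸ hcc l l
  have hpair_ne : ∏ i, ∏ j ∈ Ioi i, (1 + c i * c j) ≠ 0 :=
    prod_ne_zero_iff.mpr fun i _ => prod_ne_zero_iff.mpr fun j _ => hcc i j
  have hvand_ne : ∏ i, ∏ j ∈ Ioi i, (c j - c i) ≠ 0 := by
    rw [← Matrix.det_vandermonde]
    exact Matrix.det_vandermonde_ne_zero_iff.mpr hinj
  refine mul_right_cancel₀
    (mul_ne_zero (mul_ne_zero hpow_ne hdiag_ne) (mul_ne_zero hvand_ne hpair_ne)) (hdet.trans ?_)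
  ring

lemma map_skewCoeffMatrix {S : Type*} [CommRing S] (φ : R →+* S) (n : ℕ) (p : R[X]) :
    φ.mapMatrix (skewCoeffMatrix n p) = skewCoeffMatrix n (p.map φ) := by
  ext i s
  simp [skewCoeffMatrix, apply_ite φ]

lemma det_skewCoeffMatrix_prod_mvPolynomial_X (n : ℕ) :
    (skewCoeffMatrix n (∏ i : Fin (n + 1),
        (1 + C (MvPolynomial.X i : MvPolynomial (Fin (n + 1)) ℤ) * X))).det =
      ∏ i, ∏ j ∈ Ioi i, (1 + MvPolynomial.X i * MvPolynomial.X j) := by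
  let A := MvPolynomial (Fin (n + 1)) ℤ
  let x (i : Fin (n + 1)) : A := MvPolynomial.X i
  let ι : A →+* FractionRing A := algebraMap A (FractionRing A)
  have hι : Function.Injective ι := IsFractionRing.injective A (FractionRing A)
  have hx (i j : Fin (n + 1)) : 1 + x i * x j ≠ 0 := fun h => by
    simpa [x] using congrArg (MvPolynomial.eval fun _ => (0 : ℤ)) h
  have hgeneric := det_skewCoeffMatrix_mul_prod
    (c := fun i : Fin n => ι (x i.castSucc)) (r := 1 + C (ι (x (Fin.last n))) * X)
    (fun i => (map_ne_zero_iff ι hι).mpr (MvPolynomial.X_ne_zero _))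
    ((hι.comp (MvPolynomial.X_injective (R := ℤ))).comp (Fin.castSucc_injective n))
    (fun i j => by simpa using (map_ne_zero_iff ι hι).mpr (hx i.castSucc j.castSucc))
    (by compute_degree)
  apply hι
  rw [RingHom.map_det, map_skewCoeffMatrix, prod_prod_Ioi_eq_castSucc_mul_last,
    Fin.prod_univ_castSucc, mul_comm, mul_comm (∏ i : Fin n, ∏ j ∈ Ioi i, _)]
  simpa [Polynomial.map_prod, x, mul_comm (ι (MvPolynomial.X (Fin.last n)))] using hgeneric

theorem det_skewCoeffMatrix_prod {n : ℕ} (c : Fin (n + 1) → R) :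
    (skewCoeffMatrix n (∏ i, (1 + C (c i) * X))).det = ∏ i, ∏ j ∈ Ioi i, (1 + c i * c j) := by
  let φ : MvPolynomial (Fin (n + 1)) ℤ →+* R := MvPolynomial.eval₂Hom (Int.castRingHom R) c
  have hφX (i : Fin (n + 1)) : φ (MvPolynomial.X i) = c i := MvPolynomial.eval₂Hom_X' _ c i
  have hφ := congrArg φ (det_skewCoeffMatrix_prod_mvPolynomial_X n)
  rw [RingHom.map_det, map_skewCoeffMatrix] at hφ
  simpa [Polynomial.map_prod, hφX] using hφ

end SkewCoeff

theorem det_m_factorisation_general {R : Type*} [CommRing R] {n : ℕ} (q : Fin n → Rˣ)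
    (a b : Fin n → R) (c : Fin (n + 1) → R) :
    let g : Fin n → Rˣ → R := fun k t =>
      (t⁻¹ : Rˣ) ^ n * (∏ i, (1 + c i * t)) *
        (∏ i ∈ Iio k, (1 - b i * t)) * (∏ i ∈ Ioi k, (1 + a i * t))
    (Matrix.of fun k l : Fin n => g k (q l) - g k (-(q l)⁻¹)).det =
      (∏ i, ∏ j ∈ Ioi i, (1 + c i * c j)) * (∏ i, ∏ j ∈ Ioi i, (b i + a j)) *
      (∏ i, ((q i)⁻¹ : Rˣ) ^ n * (1 + (q i : R) ^ 2)) *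
      (∏ i, ∏ j ∈ Ioi i, ((q i - q j : R) * (1 + q i * q j))) := by
  intro g
  let p : R[X] := ∏ i, (1 + C (c i) * X)
  have hp : p.natDegree ≤ n + 1 := by
    simpa using natDegree_prod_one_add_C_mul_X_le univ c
  let t (l : Fin n) : R := q l
  let u (l : Fin n) : R := ↑(-(q l)⁻¹)
  have htu (l : Fin n) : t l * u l = -1 := by simp [t, u]
  have hmatrix : (Matrix.of fun k l : Fin n => g k (q l) - g k (-(q l)⁻¹)) =
      (Matrix.of fun k (i : Fin n) => (mixedProd a b k).coeff i) *
        (skewCoeffMatrix n p * skewPowMatrix n t u) := by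
    rw [← of_antisymm_eval_eq_mul hp (natDegree_mixedProd_lt a b) htu]
    ext k l
    simp [g, p, t, u, mixedProd, eval_prod, mul_assoc]
  have hsign : (∏ i, ∏ j ∈ Ioi i, -(b i + a j)) *
      ∏ i, ∏ j ∈ Ioi i, ((t j - t i) * (1 + t i * t j)) =
        (∏ i, ∏ j ∈ Ioi i, (b i + a j)) *
          ∏ i, ∏ j ∈ Ioi i, ((t i - t j) * (1 + t i * t j)) := by
    simp_rw [← prod_mul_distrib]
    exact prod_congr rfl fun i _ => prod_congr rfl fun j _ => by ring
  have hu (i : Fin n) : -u i = ↑(q i)⁻¹ := by simp [u]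
  rw [hmatrix, Matrix.det_mul, Matrix.det_mul, det_coeff_mixedProd, det_skewCoeffMatrix_prod,
    det_skewPowMatrix_of_mul_eq_neg_one htu]
  simp_rw [hu]
  linear_combination ((∏ i, ∏ j ∈ Ioi i, (1 + c i * c j)) *
    ∏ i, ((q i)⁻¹ : Rˣ) ^ n * (1 + (q i : R) ^ 2)) * hsign

/-- Lemma A.1 (Lemma 6.2): the determinant `det(m_{k,ℓ}(q_ℓ))` with
`m_{k,ℓ}(q_ℓ) = g̃_k(q_ℓ) - g̃_k(-q_ℓ⁻¹)` factorises completely.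
Rows/columns are 0-indexed: `k : Fin n` has 1-indexed value `k+1`, so
`∏_{i=1}^{k-1}` becomes a product over `i < k` and `∏_{i=k+1}^{n}` over `k < i`. -/
theorem det_m_factorisation {K : Type*} [Field K] {n : ℕ} (hn : 1 ≤ n)
    (q a b : Fin n → K) (c : Fin (n + 1) → K) (hq : ∀ i, q i ≠ 0) :
    let g : Fin n → K → K := fun k t =>
      t⁻¹ ^ n * (∏ i : Fin (n + 1), (1 + c i * t)) *
        (∏ i ∈ Finset.univ.filter (fun i => i < k), (1 - b i * t)) *
        (∏ i ∈ Finset.univ.filter (fun i => k < i), (1 + a i * t))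
    Matrix.det (Matrix.of fun k l : Fin n => g k (q l) - g k (-(q l)⁻¹)) =
      (∏ i : Fin (n + 1), ∏ j ∈ Finset.univ.filter (fun j => i < j), (1 + c i * c j)) *
      (∏ i : Fin n, ∏ j ∈ Finset.univ.filter (fun j => i < j), (b i + a j)) *
      (∏ i : Fin n, (q i)⁻¹ ^ n * (1 + q i ^ 2)) *
      (∏ i : Fin n, ∏ j ∈ Finset.univ.filter (fun j => i < j),
        ((q i - q j) * (1 + q i * q j))) := by
  simpa [filter_lt_eq_Ioi, filter_gt_eq_Iio] using
    det_m_factorisation_general (fun i => Units.mk0 (q i) (hq i)) a b c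
end

section
/- For n ≥ 1 and variables x_1,...,x_n, ∏_{1≤i≤j≤n}(1 + x_i x_j) = Σ_γ s_γ(x_1,...,x_n), where the sum is over all partitions γ which in Frobenius notation (a_1,...,a_r | b_1,...,b_r) satisfy a_i = b_i + 1 for all i. -/
open Finset

/-- Complete homogeneous symmetric polynomial of degree `r` evaluated at `x`. -/
noncomputable def hpoly {σ : Type*} [Fintype σ] [DecidableEq σ] {R : Type*} [CommRing R]
    (x : σ → R) (r : ℕ) : R :=
  ∑ d ∈ (Finset.univ : Finset (σ → Fin (r + 1))).filter (fun d => ∑ i, (d i : ℕ) = r),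
    ∏ i, x i ^ ((d i : ℕ))

/-- `hpoly` with integer index, zero for negative degrees. -/
noncomputable def hpolyZ {σ : Type*} [Fintype σ] [DecidableEq σ] {R : Type*} [CommRing R]
    (x : σ → R) (k : ℤ) : R :=
  if 0 ≤ k then hpoly x k.toNat else 0

/-- A partition: weakly decreasing, eventually zero sequence of naturals (0-indexed parts,
so `parts 0` is the first part). -/
structure Partn where
  parts : ℕ → ℕ
  antitone' : Antitone parts
  eventually_zero : ∃ N, ∀ i, N ≤ i → parts i = 0

/-- The conjugate partition: `conj p j` is the number of parts exceeding `j`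
(the length of column `j+1`). -/
noncomputable def Partn.conj (p : Partn) (j : ℕ) : ℕ :=
  Nat.card {i : ℕ | j < p.parts i}

/-- Number of nonzero parts. -/
noncomputable def Partn.len (p : Partn) : ℕ :=
  Nat.card {i : ℕ | 0 < p.parts i}

/-- Membership in `𝒫₁ = 𝒞`: in Frobenius notation every arm length exceeds the
corresponding leg length by exactly 1 (armᵢ = partsᵢ - i - 1, legᵢ = conjᵢ - i - 1,
0-indexed along the diagonal `i < parts i`). -/
def Partn.InC (p : Partn) : Prop :=
  ∀ i, i < p.parts i → p.parts i = p.conj i + 1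

/-- Membership in `𝒫₋₁ = 𝒜` (conjugates of `𝒫₁`): every leg length exceeds the
corresponding arm length by exactly 1. -/
def Partn.InA (p : Partn) : Prop :=
  ∀ i, i < p.parts i → p.conj i = p.parts i + 1

/-- Schur polynomial in `n` variables via the Jacobi–Trudi determinant
`s_p = det(h_{p_i - i + j})_{1 ≤ i,j ≤ ℓ(p)}`; this vanishes when `ℓ(p) > n`. -/
noncomputable def schur {n : ℕ} {R : Type*} [CommRing R] (x : Fin n → R) (p : Partn) : R :=
  Matrix.det (Matrix.of fun i j : Fin p.len =>
    hpolyZ x ((p.parts i : ℤ) - (i : ℕ) + (j : ℕ)))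

/-- Skew Schur polynomial `s_{lam/mu}` in `n` variables via the Jacobi–Trudi determinant
`det(h_{lam_i - mu_j - i + j})`; this vanishes unless `mu ⊆ lam`. -/
noncomputable def skewSchur {n : ℕ} {R : Type*} [CommRing R] (x : Fin n → R)
    (lam mu : Partn) : R :=
  Matrix.det (Matrix.of fun i j : Fin (max lam.len mu.len) =>
    hpolyZ x ((lam.parts i : ℤ) - (mu.parts j : ℕ) - (i : ℕ) + (j : ℕ)))

/-!
Taking off its outermost hook sends a partition of `𝒞` with exactly `N + 1` parts to a partition
of `𝒞` with at most `N` parts, bijectively, and that hook has leg `N` and arm `N + 1`. Hence, for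
every multilinear alternating `A`, the sum of `A(r_{γ₁}, r_{γ₂ - 1}, …)` over `γ ∈ 𝒞` collapses to
the single value `A(r_{-j} + (-1)^j r_{j + 2})_{j ≥ 0}`. By the bialternant formula
`s_γ = det(x_i^{γ_j - j}) / det(x_i^{-j})` the identity thus reduces to evaluating
`det(x_i^{-j} + (-1)^j x_i^{j + 2})`. Now `x^{-j} + (-1)^j x^{j + 2}` is `1 + x²` times a monic
polynomial of degree `j` in `x⁻¹ - x`, so this determinant is `∏ (1 + x_i²)` times a Vandermonde
determinant, whose factors are `(x_j⁻¹ - x_j) - (x_i⁻¹ - x_i) = (x_j⁻¹ - x_i⁻¹)(1 + x_i x_j)`.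
All this makes sense in the field of rational functions, and implies the identity in any ring.
-/

namespace Partn

@[ext]
theorem ext {p q : Partn} (h : ∀ i, p.parts i = q.parts i) : p = q := by
  cases p
  cases q
  simpa [funext_iff] using h

theorem lt_conj_iff (p : Partn) (i j : ℕ) : i < p.conj j ↔ j < p.parts i := by
  have hex : ∃ m, p.parts m ≤ j :=
    p.eventually_zero.imp fun N hN => (hN N le_rfl).trans_le (Nat.zero_le j)
  have hrows (k : ℕ) : j < p.parts k ↔ k < Nat.find hex := by
    simp only [Nat.lt_find_iff, not_le]
    exact ⟨fun h m hm => h.trans_le (p.antitone' hm), fun h => h k le_rfl⟩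
  have hconj : p.conj j = Nat.find hex := by
    simp only [conj, hrows]
    exact Nat.card_eq_card_toFinset _ |>.trans (by simp)
  rw [hconj, hrows]

theorem conj_zero (p : Partn) : p.conj 0 = p.len := rfl

theorem lt_len_iff (p : Partn) (i : ℕ) : i < p.len ↔ 0 < p.parts i :=
  p.lt_conj_iff i 0

theorem len_le_iff (p : Partn) (N : ℕ) : p.len ≤ N ↔ p.parts N = 0 := by
  rw [← not_lt, lt_len_iff, Nat.pos_iff_ne_zero, not_not]

theorem parts_eq_zero {p : Partn} {i : ℕ} (h : p.len ≤ i) : p.parts i = 0 :=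
  (p.len_le_iff i).1 h

/-- The empty partition. -/
def empty : Partn where
  parts _ := 0
  antitone' := antitone_const
  eventually_zero := ⟨0, fun _ _ => rfl⟩

theorem len_empty : empty.len = 0 := Nat.le_zero.1 ((len_le_iff _ _).2 rfl)

theorem len_eq_zero {p : Partn} : p.len = 0 ↔ p = empty := by
  refine ⟨fun h => ext fun i => parts_eq_zero (h.trans_le (Nat.zero_le i)), ?_⟩
  rintro rfl
  exact len_empty

/-- The partition obtained from a partition with at most `N` parts by adjoining an outermost hook
with leg `N` and arm `N + 1`. The `max` and the cut-off at row `N` only serve to make this a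
partition for every `p`. -/
def hook (N : ℕ) (p : Partn) : Partn where
  parts
    | 0 => max (N + 2) (p.parts 0 + 1)
    | i + 1 => if i < N then p.parts i + 1 else 0
  antitone' := by
    refine antitone_nat_of_succ_le fun i => ?_
    cases i with
    | zero => dsimp only; split_ifs <;> omega
    | succ i =>
      have := p.antitone' (Nat.le_add_right i 1)
      dsimp only
      split_ifs <;> omega
  eventually_zero := by
    refine ⟨N + 1, fun i hi => ?_⟩
    obtain ⟨i, rfl⟩ := Nat.exists_eq_add_of_lt hi
    exact if_neg (by omega)

theorem hook_parts_zero (N : ℕ) (p : Partn) :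
    (p.hook N).parts 0 = max (N + 2) (p.parts 0 + 1) := rfl

theorem hook_parts_succ (N : ℕ) (p : Partn) (i : ℕ) :
    (p.hook N).parts (i + 1) = if i < N then p.parts i + 1 else 0 := rfl

theorem len_hook (N : ℕ) (p : Partn) : (p.hook N).len = N + 1 := by
  refine le_antisymm ?_ (Nat.succ_le_iff.2 ?_)
  · simp [len_le_iff, hook_parts_succ]
  · cases N <;> simp [lt_len_iff, hook_parts_zero, hook_parts_succ]

theorem hook_conj_succ {N j : ℕ} {p : Partn} (hp : p.len ≤ N) (hj : j ≤ N) :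
    (p.hook N).conj (j + 1) = p.conj j + 1 := by
  refine eq_of_forall_lt_iff fun i => ?_
  rw [lt_conj_iff]
  cases i with
  | zero => rw [hook_parts_zero]; omega
  | succ i =>
    rw [hook_parts_succ, Nat.add_lt_add_iff_right, lt_conj_iff]
    split_ifs with hi
    · omega
    · have := parts_eq_zero (hp.trans (not_lt.1 hi))
      omega

theorem hook_injOn (N : ℕ) : Set.InjOn (hook N) {p | p.len ≤ N} := by
  intro p hp q hq hpq
  ext i
  rcases lt_or_ge i N with hi | hi
  · simpa [hook_parts_succ, hi] using congrArg (fun r => parts r (i + 1)) hpq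
  · rw [parts_eq_zero (le_trans hp hi), parts_eq_zero (le_trans hq hi)]

/-- The partition obtained by taking off the outermost hook, that is, the first row and the first
column. -/
def unhook (p : Partn) : Partn where
  parts i := p.parts (i + 1) - 1
  antitone' _ _ hij := Nat.sub_le_sub_right (p.antitone' (Nat.succ_le_succ hij)) 1
  eventually_zero := p.eventually_zero.imp fun N hN i hi => by rw [hN (i + 1) (by omega)]

theorem unhook_parts (p : Partn) (i : ℕ) : p.unhook.parts i = p.parts (i + 1) - 1 := rfl

theorem len_unhook_le {p : Partn} {N : ℕ} (hp : p.len ≤ N + 1) : p.unhook.len ≤ N := by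
  rw [len_le_iff, unhook_parts, parts_eq_zero hp]

theorem comp_rows_eq_snoc {α : Type*} (r : ℤ → α) {p : Partn} {N : ℕ} (hp : p.len ≤ N) :
    (fun i : Fin (N + 1) => r (p.parts i - (i : ℕ))) =
      Fin.snoc (α := fun _ => α) (fun i : Fin N => r (p.parts i - (i : ℕ))) (r (-N)) := by
  funext i
  refine Fin.lastCases ?_ (fun i => ?_) i <;> simp [parts_eq_zero hp]

theorem inC_empty : empty.InC := fun _ hi => absurd hi (Nat.not_lt_zero _)

namespace InC

variable {p : Partn} {N : ℕ}

theorem parts_zero_le (h : p.InC) : p.parts 0 ≤ p.len + 1 := by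
  rcases Nat.eq_zero_or_pos (p.parts 0) with h0 | h0
  · omega
  · exact (h 0 h0).le

theorem hook_parts_zero (h : p.InC) (hp : p.len ≤ N) : (p.hook N).parts 0 = N + 2 :=
  max_eq_left (by have := h.parts_zero_le; omega)

theorem comp_rows_hook_eq_vecCons {α : Type*} (r : ℤ → α) (h : p.InC) (hp : p.len ≤ N) :
    (fun i : Fin (N + 1) => r ((p.hook N).parts i - (i : ℕ))) =
      Matrix.vecCons (r (N + 2)) (fun i : Fin N => r (p.parts i - (i : ℕ))) := by
  funext i
  refine Fin.cases ?_ (fun i => ?_) i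
  · simp [h.hook_parts_zero hp]
  · simp [hook_parts_succ]

theorem hook (h : p.InC) (hp : p.len ≤ N) : (p.hook N).InC := by
  intro i hi
  cases i with
  | zero => rw [h.hook_parts_zero hp, conj_zero, len_hook]
  | succ i =>
    rw [hook_parts_succ] at hi ⊢
    split_ifs at hi ⊢ with hiN
    · rw [hook_conj_succ hp hiN.le, h i (by omega)]
    · omega

theorem hook_unhook (h : p.InC) (hp : p.len = N + 1) : p.unhook.hook N = p := by
  ext i
  cases i with
  | zero =>
    have hpos : 0 < p.parts 0 := (p.lt_len_iff 0).1 (by omega)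
    have hrow : p.parts 0 = N + 2 := by rw [h 0 hpos, conj_zero, hp]
    have := p.antitone' (Nat.zero_le (0 + 1))
    rw [Partn.hook_parts_zero, unhook_parts]
    omega
  | succ i =>
    have := p.lt_len_iff (i + 1)
    rw [hook_parts_succ, unhook_parts]
    split_ifs <;> omega

theorem unhook (h : p.InC) (hp : p.len = N + 1) : p.unhook.InC := by
  intro i hi
  rw [unhook_parts] at hi ⊢
  have hlen := p.lt_len_iff (i + 1)
  have hconj := hook_conj_succ (j := i) (len_unhook_le hp.le) (by omega)
  rw [h.hook_unhook hp] at hconj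
  have := h (i + 1) (by omega)
  omega

end InC

open Classical in
/-- The set of partitions of class `𝒞` with at most `N` parts (see `mem_inCFinset`). Among them,
those with exactly `N` parts arise from those with at most `N - 1` parts by adjoining a hook. -/
noncomputable def inCFinset : ℕ → Finset Partn
  | 0 => {empty}
  | N + 1 => inCFinset N ∪ (inCFinset N).image (hook N)

theorem mem_inCFinset {N : ℕ} {p : Partn} : p ∈ inCFinset N ↔ p.InC ∧ p.len ≤ N := by
  induction N generalizing p with
  | zero =>
    rw [inCFinset, mem_singleton, Nat.le_zero, len_eq_zero, iff_and_self]
    rintro rfl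
    exact inC_empty
  | succ N ih =>
    simp only [inCFinset, mem_union, mem_image, ih]
    constructor
    · rintro (⟨h, hp⟩ | ⟨q, ⟨h, hq⟩, rfl⟩)
      · exact ⟨h, hp.trans (Nat.le_succ N)⟩
      · exact ⟨h.hook hq, (len_hook N q).le⟩
    · rintro ⟨h, hp⟩
      rcases hp.lt_or_eq with hlt | heq
      · exact Or.inl ⟨h, Nat.lt_succ_iff.1 hlt⟩
      · exact Or.inr ⟨p.unhook, ⟨h.unhook heq, len_unhook_le hp⟩, h.hook_unhook heq⟩

theorem sum_inCFinset_succ {M : Type*} [AddCommMonoid M] (N : ℕ) (f : Partn → M) :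
    ∑ p ∈ inCFinset (N + 1), f p = ∑ p ∈ inCFinset N, f p + ∑ p ∈ inCFinset N, f (p.hook N) := by
  classical
  have hinj : Set.InjOn (hook N) (inCFinset N) :=
    (hook_injOn N).mono fun _ hp => (mem_inCFinset.1 hp).2
  have hdisj : Disjoint (inCFinset N) ((inCFinset N).image (hook N)) := by
    simp only [disjoint_left, mem_image, not_exists, not_and]
    rintro _ hp q - rfl
    have := (mem_inCFinset.1 hp).2
    rw [len_hook] at this
    omega
  rw [inCFinset, sum_union hdisj, sum_image hinj]

end Partn

open Partn

theorem map_snoc_eq_smul_map_cons {R V W : Type*} [CommRing R] [AddCommGroup V] [Module R V]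
    [AddCommGroup W] [Module R W] {N : ℕ} (A : V [⋀^Fin (N + 1)]→ₗ[R] W) (g : Fin N → V) (v : V) :
    A (Fin.snoc (α := fun _ => V) g v) = (-1 : ℤ) ^ N • A (Matrix.vecCons v g) := by
  simpa [Fin.insertNth_last'] using A.map_insertNth (Fin.last N) v g

theorem sum_inCFinset_alternating {R V W : Type*} [CommRing R] [AddCommGroup V] [Module R V]
    [AddCommGroup W] [Module R W] (r : ℤ → V) (N : ℕ) (A : V [⋀^Fin N]→ₗ[R] W) :
    ∑ p ∈ inCFinset N, A (fun i => r (p.parts i - (i : ℕ))) =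
      A (fun j => r (-(j : ℕ)) + (-1 : ℤ) ^ (j : ℕ) • r ((j : ℕ) + 2)) := by
  induction N with
  | zero => simpa [inCFinset] using congrArg A (Subsingleton.elim _ _)
  | succ N ih =>
    have hsnoc : (fun j : Fin (N + 1) => r (-(j : ℕ)) + (-1 : ℤ) ^ (j : ℕ) • r ((j : ℕ) + 2)) =
        Fin.snoc (α := fun _ => V)
          (fun j : Fin N => r (-(j : ℕ)) + (-1 : ℤ) ^ (j : ℕ) • r ((j : ℕ) + 2))
          (r (-N) + (-1 : ℤ) ^ N • r (N + 2)) := by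
      funext j
      refine Fin.lastCases ?_ (fun j => ?_) j <;> simp
    have hsign : (-1 : ℤ) ^ N * (-1) ^ N = 1 := by rw [← mul_pow]; simp
    calc ∑ p ∈ inCFinset (N + 1), A (fun i => r (p.parts i - (i : ℕ)))
        = (-1 : ℤ) ^ N • ∑ p ∈ inCFinset N, A.curryLeft (r (-N)) (fun i => r (p.parts i - (i : ℕ)))
          + ∑ p ∈ inCFinset N, A.curryLeft (r (N + 2)) (fun i => r (p.parts i - (i : ℕ))) := by
          rw [sum_inCFinset_succ, smul_sum]
          congr 1 <;> refine sum_congr rfl fun p hp => ?_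
          · rw [comp_rows_eq_snoc r (mem_inCFinset.1 hp).2, map_snoc_eq_smul_map_cons,
              AlternatingMap.curryLeft_apply_apply]
          · rw [(mem_inCFinset.1 hp).1.comp_rows_hook_eq_vecCons r (mem_inCFinset.1 hp).2,
              AlternatingMap.curryLeft_apply_apply]
      _ = A (fun j => r (-(j : ℕ)) + (-1 : ℤ) ^ (j : ℕ) • r ((j : ℕ) + 2)) := by
          rw [ih, ih, hsnoc, map_snoc_eq_smul_map_cons, ← AlternatingMap.curryLeft_apply_apply,
            map_add, map_zsmul, AlternatingMap.add_apply, AlternatingMap.smul_apply, smul_add,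
            smul_smul, hsign, one_smul]

section Complete

variable {σ R : Type*} [CommRing R] (x : σ → R)

/-- The polynomial `∏ (1 - x_i t)` over `i ∈ s`, that is, the generating polynomial
`∑ (-1)^r e_r t^r` of the signed elementary symmetric polynomials of the `x_i` with `i ∈ s`. -/
noncomputable def signedEPoly (s : Finset σ) : Polynomial R :=
  ∏ i ∈ s, (1 - Polynomial.C (x i) * Polynomial.X)

theorem natDegree_signedEPoly_le (s : Finset σ) :
    (signedEPoly x s).natDegree ≤ #s := by
  have hfactor (i : σ) : (1 - Polynomial.C (x i) * Polynomial.X).natDegree ≤ 1 := by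
    compute_degree
  simpa [signedEPoly] using
    (Polynomial.natDegree_prod_le s _).trans (sum_le_card_nsmul s _ 1 fun i _ => hfactor i)

theorem coeff_zero_signedEPoly (s : Finset σ) :
    (signedEPoly x s).coeff 0 = 1 := by
  simp [signedEPoly, Polynomial.coeff_zero_prod]

theorem mk_pow_mul_one_sub_C_mul_X (a : R) :
    PowerSeries.mk (a ^ ·) * (1 - PowerSeries.C a * PowerSeries.X) = 1 := by
  simpa [PowerSeries.rescale_mk, PowerSeries.rescale_X] using
    congrArg (PowerSeries.rescale a) (PowerSeries.mk_one_mul_one_sub_eq_one R)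

variable [Fintype σ] [DecidableEq σ]

theorem hpolyZ_zero : hpolyZ x 0 = 1 := by
  simp [hpolyZ, hpoly]

theorem hpolyZ_of_neg {k : ℤ} (hk : k < 0) : hpolyZ x k = 0 :=
  if_neg hk.not_ge

theorem map_hpolyZ {S : Type*} [CommRing S] (f : R →+* S) (k : ℤ) :
    f (hpolyZ x k) = hpolyZ (f ∘ x) k := by
  simp [hpolyZ, hpoly, apply_ite f]

/-- The generating series `∑ h_r t^r` of the complete homogeneous symmetric polynomials. -/
noncomputable def hSeries : PowerSeries R :=
  PowerSeries.mk (hpoly x)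

theorem hSeries_eq_prod : hSeries x = ∏ i, PowerSeries.mk (x i ^ ·) := by
  ext r
  simp only [hSeries, hpoly, PowerSeries.coeff_prod, PowerSeries.coeff_mk]
  refine sum_nbij (fun d => Finsupp.equivFunOnFinite.symm fun i => (d i : ℕ)) ?_ ?_ ?_ ?_
  · intro d hd
    simpa [mem_finsuppAntidiag] using hd
  · intro d _ e _ hde
    ext i
    simpa using DFunLike.congr_fun hde i
  · intro l hl
    have hsum : ∑ i, l i = r := (mem_finsuppAntidiag.1 (mem_coe.1 hl)).1
    have hle (i : σ) : l i < r + 1 :=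
      Nat.lt_succ_iff.2 (hsum ▸ single_le_sum (fun _ _ => Nat.zero_le _) (mem_univ i))
    exact ⟨fun i => ⟨l i, hle i⟩, by simpa using hsum, by ext; simp⟩
  · intro d _
    simp

theorem hSeries_mul_signedEPoly (s : Finset σ) :
    hSeries x * (signedEPoly x s : PowerSeries R) = ∏ i ∈ sᶜ, PowerSeries.mk (x i ^ ·) := by
  have hcoe : (signedEPoly x s : PowerSeries R) =
      ∏ i ∈ s, (1 - PowerSeries.C (x i) * PowerSeries.X) := by
    rw [signedEPoly, ← Polynomial.coeToPowerSeries.ringHom_apply, map_prod]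
    simp [Polynomial.coeToPowerSeries.ringHom_apply]
  rw [hcoe, hSeries_eq_prod, ← prod_mul_prod_compl s, mul_right_comm, ← prod_mul_distrib]
  simp [mk_pow_mul_one_sub_C_mul_X]

theorem sum_hpolyZ_mul_coeff_rev {P : Polynomial R} {N d : ℕ} (hP : P.natDegree < N) {m : ℤ}
    (hm : m + N = d + 1) :
    ∑ k : Fin N, hpolyZ x (m + (k : ℕ)) * P.coeff k.rev =
      PowerSeries.coeff d (hSeries x * (P : PowerSeries R)) := by
  have hshift (k : Fin N) : PowerSeries.coeff d
      (PowerSeries.C (P.coeff k) * PowerSeries.X ^ (k : ℕ) * hSeries x) =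
        hpolyZ x (m + (k.rev : ℕ)) * P.coeff k := by
    have hk : m + (k.rev : ℕ) = (d : ℤ) - k := by rw [Fin.val_rev]; omega
    rw [hk, mul_assoc, PowerSeries.coeff_C_mul, PowerSeries.coeff_X_pow_mul', mul_comm, hpolyZ]
    split_ifs with h₁ h₂ h₂
    · rw [hSeries, PowerSeries.coeff_mk]
      congr 2
      omega
    · omega
    · omega
    · rfl
  have hcoe : (P : PowerSeries R) =
      ∑ k : Fin N, PowerSeries.C (P.coeff k) * PowerSeries.X ^ (k : ℕ) := by
    conv_lhs => rw [P.as_sum_range_C_mul_X_pow' hP, ← Polynomial.coeToPowerSeries.ringHom_apply]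
    simp [← Fin.sum_univ_eq_sum_range, Polynomial.coeToPowerSeries.ringHom_apply]
  rw [mul_comm, hcoe, sum_mul, map_sum, ← Equiv.sum_comp Fin.revPerm]
  simp only [hshift, Fin.revPerm_apply, Fin.rev_rev]

end Complete

theorem det_smul_eq_zero_of_mulVec_eq_zero {R m : Type*} [CommRing R] [Fintype m] [DecidableEq m]
    {A : Matrix m m R} {v : m → R} (h : A.mulVec v = 0) : A.det • v = 0 := by
  rw [← Matrix.one_mulVec v, ← Matrix.smul_mulVec, ← Matrix.adjugate_mul, ← Matrix.mulVec_mulVec,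
    h, Matrix.mulVec_zero]

section JacobiTrudi

variable {n : ℕ} {R : Type*} [CommRing R] (x : Fin n → R)

/-- The Jacobi–Trudi matrix `h_{p_i - i + j}` with `N` rows. Its determinant is the Schur
polynomial of `p` for every `N ≥ p.len` (see `schur_eq_det_jacobiTrudi`). -/
noncomputable def jacobiTrudi (p : Partn) (N : ℕ) : Matrix (Fin N) (Fin N) R :=
  Matrix.of fun i j => hpolyZ x ((p.parts i : ℤ) - (i : ℕ) + (j : ℕ))

theorem schur_eq_det_jacobiTrudi {p : Partn} {N : ℕ} (hp : p.len ≤ N) :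
    schur x p = (jacobiTrudi x p N).det := by
  induction N, hp using Nat.le_induction with
  | base => rfl
  | succ N hN ih =>
    have hlast (j : Fin (N + 1)) :
        jacobiTrudi x p (N + 1) (Fin.last N) j = if j = Fin.last N then 1 else 0 := by
      simp only [jacobiTrudi, Matrix.of_apply, Fin.val_last, parts_eq_zero hN]
      split_ifs with hj
      · rw [hj, Fin.val_last, ← hpolyZ_zero x]
        congr 1
        omega
      · exact hpolyZ_of_neg x (by have := Fin.val_lt_last hj; omega)
    rw [ih, Matrix.det_succ_row _ (Fin.last N), sum_eq_single (Fin.last N)]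
    · rw [hlast, if_pos rfl, Fin.val_last, Even.neg_one_pow ⟨N, rfl⟩, one_mul, one_mul]
      congr 1
      ext i j
      simp [jacobiTrudi]
    · intro j _ hj
      rw [hlast, if_neg hj, mul_zero, zero_mul]
    · simp

theorem schur_empty : schur x Partn.empty = 1 := by
  rw [schur_eq_det_jacobiTrudi x len_empty.le, Matrix.det_isEmpty]

theorem map_schur {S : Type*} [CommRing S] (f : R →+* S) (p : Partn) :
    f (schur x p) = schur (f ∘ x) p := by
  rw [schur, schur, RingHom.map_det]
  congr 1
  ext i j
  exact map_hpolyZ x f _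

theorem schur_eq_zero_of_lt_len {p : Partn} (hp : n < p.len) : schur x p = 0 := by
  have hdeg : (signedEPoly x univ).natDegree < p.len :=
    (natDegree_signedEPoly_le x univ).trans_lt (by simpa using hp)
  have hker : (jacobiTrudi x p p.len).mulVec (fun k => (signedEPoly x univ).coeff k.rev) = 0 := by
    funext i
    have hpos : 0 < p.parts i := (p.lt_len_iff i).1 i.2
    have hd : (p.parts i : ℤ) - (i : ℕ) + p.len = (p.parts i + i.rev : ℕ) + 1 := by
      have := Fin.val_rev i
      omega
    refine (sum_hpolyZ_mul_coeff_rev x hdeg hd).trans ?_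
    rw [hSeries_mul_signedEPoly]
    simp [PowerSeries.coeff_one, hpos.ne']
  have hlast := congrFun (det_smul_eq_zero_of_mulVec_eq_zero hker) (Fin.rev ⟨0, by omega⟩)
  rw [← schur_eq_det_jacobiTrudi x le_rfl] at hlast
  simpa only [Pi.smul_apply, Pi.zero_apply, Fin.rev_rev, coeff_zero_signedEPoly, smul_eq_mul,
    mul_one] using hlast

theorem finsum_inC_schur :
    ∑ᶠ (γ : Partn) (_ : γ.InC), schur x γ = ∑ γ ∈ inCFinset n, schur x γ := by
  refine finsum_cond_eq_sum_of_cond_iff _ fun {γ} hγ => ?_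
  rw [mem_inCFinset, iff_self_and]
  exact fun _ => not_lt.1 fun hlt => hγ (schur_eq_zero_of_lt_len x hlt)

end JacobiTrudi

section Dickson

open Polynomial

theorem dickson_two_zero_eq_one {R : Type*} [CommRing R] (a : R) : dickson 2 a 0 = 1 := by
  rw [dickson_zero]
  norm_num

theorem monic_and_natDegree_dickson_two {R : Type*} [CommRing R] [Nontrivial R] (a : R) (n : ℕ) :
    (dickson 2 a n).Monic ∧ (dickson 2 a n).natDegree = n := by
  induction n using Nat.twoStepInduction with
  | zero => rw [dickson_two_zero_eq_one]; exact ⟨monic_one, natDegree_one⟩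
  | one => rw [dickson_one]; exact ⟨monic_X, natDegree_X⟩
  | more n ih₀ ih₁ =>
    have hlead : (X * dickson 2 a (n + 1)).natDegree = n + 2 := by
      rw [natDegree_X_mul ih₁.1.ne_zero, ih₁.2]
    have hlt : (C a * dickson 2 a n).natDegree < (X * dickson 2 a (n + 1)).natDegree := by
      have := (natDegree_C_mul_le a (dickson 2 a n)).trans ih₀.2.le
      omega
    rw [dickson_add_two]
    exact ⟨(monic_X.mul ih₁.1).sub_of_left (degree_lt_degree hlt),
      (natDegree_sub_eq_left_of_natDegree_lt hlt).trans hlead⟩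

theorem monic_dickson_two {R : Type*} [CommRing R] [Nontrivial R] (a : R) (n : ℕ) :
    (dickson 2 a n).Monic :=
  (monic_and_natDegree_dickson_two a n).1

theorem natDegree_dickson_two {R : Type*} [CommRing R] [Nontrivial R] (a : R) (n : ℕ) :
    (dickson 2 a n).natDegree = n :=
  (monic_and_natDegree_dickson_two a n).2

theorem sub_mul_eval_add_dickson_two {R : Type*} [CommRing R] (u v : R) (n : ℕ) :
    (u - v) * (dickson 2 (u * v) n).eval (u + v) = u ^ (n + 1) - v ^ (n + 1) := by
  induction n using Nat.twoStepInduction with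
  | zero => rw [dickson_two_zero_eq_one, eval_one]; ring
  | one => rw [dickson_one, eval_X]; ring
  | more n ih₀ ih₁ =>
    simp only [dickson_add_two, eval_sub, eval_mul, eval_X, eval_C]
    linear_combination (u + v) * ih₁ - u * v * ih₀

theorem one_add_sq_mul_eval_dickson_two {K : Type*} [Field K] {x : K} (hx : x ≠ 0) (j : ℕ) :
    (1 + x ^ 2) * (dickson 2 (-1) j).eval (x⁻¹ - x) =
      x ^ (-j : ℤ) + (-1) ^ j * x ^ (j + 2 : ℤ) := by
  have hgeom := sub_mul_eval_add_dickson_two x⁻¹ (-x) j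
  rw [mul_neg, inv_mul_cancel₀ hx, ← sub_eq_add_neg] at hgeom
  have hfactor : 1 + x ^ 2 = x * (x⁻¹ - -x) := by
    field_simp
    ring
  have hinv : x * x⁻¹ ^ (j + 1) = x ^ (-j : ℤ) := by
    rw [pow_succ', mul_inv_cancel_left₀ hx, zpow_neg, zpow_natCast, inv_pow]
  have hpow : x ^ (j + 2 : ℤ) = x ^ (j + 2) := by exact_mod_cast zpow_natCast x (j + 2)
  rw [hfactor, mul_assoc, hgeom, mul_sub, hinv, hpow]
  ring

end Dickson

section Alternant

variable {K : Type*} [Field K] {n : ℕ} (x : Fin n → K)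

/-- The alternant `det(x_i^{m_j})` of a sequence `m` of integer exponents. -/
def alternant (m : Fin n → ℤ) : K :=
  (Matrix.of fun j i => x i ^ m j).det

theorem alternant_neg :
    alternant x (fun j => -(j : ℕ)) = ∏ i, ∏ j ∈ Ioi i, ((x j)⁻¹ - (x i)⁻¹) := by
  rw [← Matrix.det_vandermonde fun i => (x i)⁻¹, ← Matrix.det_transpose, alternant]
  congr 1
  ext j i
  simp [Matrix.vandermonde_apply]

/-- The matrix expressing the powers of the variables through complete homogeneous symmetric
polynomials: if no `x_i` is zero then `∑ k, h_{m + k} * hToPower k i = x_i^m` for `m > -n`. -/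
noncomputable def hToPower : Matrix (Fin n) (Fin n) K :=
  Matrix.of fun k i => (signedEPoly x {i}ᶜ).coeff k.rev * x i ^ (1 - n : ℤ)

variable {x}

theorem jacobiTrudi_mul_hToPower (hx : ∀ i, x i ≠ 0) (p : Partn) :
    jacobiTrudi x p n * hToPower x =
      Matrix.of fun (j i : Fin n) => x i ^ ((p.parts j : ℤ) - (j : ℕ)) := by
  ext j i
  have hdeg : (signedEPoly x {i}ᶜ).natDegree < n :=
    (natDegree_signedEPoly_le x _).trans_lt (by simp [card_compl, i.pos])
  have hd : (p.parts j : ℤ) - (j : ℕ) + n = (p.parts j + j.rev : ℕ) + 1 := by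
    have := Fin.val_rev j
    omega
  have hsum := sum_hpolyZ_mul_coeff_rev x hdeg hd
  rw [hSeries_mul_signedEPoly, compl_compl, prod_singleton, PowerSeries.coeff_mk] at hsum
  simp only [Matrix.mul_apply, jacobiTrudi, hToPower, Matrix.of_apply, ← mul_assoc, ← sum_mul]
  rw [hsum, ← zpow_natCast, ← zpow_add₀ (hx i)]
  congr 1
  omega

theorem schur_mul_alternant (hx : ∀ i, x i ≠ 0) {p : Partn} (hp : p.len ≤ n) :
    schur x p * alternant x (fun j => -(j : ℕ)) =
      alternant x (fun j => (p.parts j : ℤ) - (j : ℕ)) := by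
  have hfactor {q : Partn} (hq : q.len ≤ n) :
      schur x q * (hToPower x).det = alternant x (fun j => (q.parts j : ℤ) - (j : ℕ)) := by
    rw [schur_eq_det_jacobiTrudi x hq, ← Matrix.det_mul, jacobiTrudi_mul_hToPower hx, alternant]
  have hempty := hfactor (len_empty.trans_le n.zero_le)
  rw [schur_empty, one_mul] at hempty
  rw [← hfactor hp, hempty]
  simp [Partn.empty]

theorem sum_inCFinset_alternant (x : Fin n → K) :
    ∑ p ∈ inCFinset n, alternant x (fun j => (p.parts j : ℤ) - (j : ℕ)) =
      (Matrix.of fun (j i : Fin n) =>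
        x i ^ (-(j : ℕ) : ℤ) + (-1) ^ (j : ℕ) * x i ^ ((j : ℕ) + 2 : ℤ)).det := by
  refine (sum_inCFinset_alternating (fun m i => x i ^ m) n Matrix.detRowAlternating).trans ?_
  refine congrArg Matrix.det ?_
  ext j i
  simp [zsmul_eq_mul]

theorem det_zpow_neg_add_zpow (hx : ∀ i, x i ≠ 0) :
    (Matrix.of fun (j i : Fin n) =>
        x i ^ (-(j : ℕ) : ℤ) + (-1) ^ (j : ℕ) * x i ^ ((j : ℕ) + 2 : ℤ)).det =
      (∏ i, (1 + x i ^ 2)) * ∏ i, ∏ j ∈ Ioi i, (((x j)⁻¹ - x j) - ((x i)⁻¹ - x i)) := by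
  let D : Matrix (Fin n) (Fin n) K :=
    Matrix.of fun i j => (Polynomial.dickson 2 (-1) (j : ℕ)).eval ((x i)⁻¹ - x i)
  have hentries : (Matrix.of fun (j i : Fin n) =>
      x i ^ (-(j : ℕ) : ℤ) + (-1) ^ (j : ℕ) * x i ^ ((j : ℕ) + 2 : ℤ)) =
        D.transpose * Matrix.diagonal (fun i => 1 + x i ^ 2) := by
    ext j i
    rw [Matrix.mul_diagonal, mul_comm]
    exact (one_add_sq_mul_eval_dickson_two (hx i) j).symm
  have hD : D.det = (Matrix.vandermonde fun i => (x i)⁻¹ - x i).det :=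
    (Matrix.det_eval_matrixOfPolynomials_eq_det_vandermonde _
      (fun j : Fin n => Polynomial.dickson 2 (-1) (j : ℕ))
      (fun j => natDegree_dickson_two _ _) (fun j => monic_dickson_two _ _)).symm
  rw [hentries, Matrix.det_mul, Matrix.det_transpose, hD, Matrix.det_vandermonde,
    Matrix.det_diagonal, mul_comm]

end Alternant

section Littlewood

variable {n : ℕ}

theorem prod_Ici_eq_sum_schur_of_field {K : Type*} [Field K] {x : Fin n → K} (hx : ∀ i, x i ≠ 0)
    (hinj : Function.Injective x) :
    ∏ i, ∏ j ∈ Ici i, (1 + x i * x j) = ∑ γ ∈ inCFinset n, schur x γ := by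
  have hne : alternant x (fun j => -(j : ℕ)) ≠ 0 := by
    rw [alternant_neg]
    refine prod_ne_zero_iff.2 fun i _ => prod_ne_zero_iff.2 fun j hj => sub_ne_zero.2 fun h => ?_
    exact (mem_Ioi.1 hj).ne' (hinj (inv_injective h))
  have hfactor (i j : Fin n) : ((x j)⁻¹ - x j) - ((x i)⁻¹ - x i) =
      ((x j)⁻¹ - (x i)⁻¹) * (1 + x i * x j) := by
    have := hx i
    have := hx j
    field_simp
    ring
  refine mul_right_cancel₀ hne (Eq.symm ?_)
  calc (∑ γ ∈ inCFinset n, schur x γ) * alternant x (fun j => -(j : ℕ))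
      = ∑ γ ∈ inCFinset n, alternant x (fun j => (γ.parts j : ℤ) - (j : ℕ)) := by
        rw [sum_mul]
        exact sum_congr rfl fun γ hγ => schur_mul_alternant hx (mem_inCFinset.1 hγ).2
    _ = (∏ i, (1 + x i ^ 2)) *
          ∏ i, ∏ j ∈ Ioi i, ((x j)⁻¹ - (x i)⁻¹) * (1 + x i * x j) := by
        simp only [sum_inCFinset_alternant, det_zpow_neg_add_zpow hx, hfactor]
    _ = (∏ i, ∏ j ∈ Ici i, (1 + x i * x j)) * alternant x (fun j => -(j : ℕ)) := by
        simp only [alternant_neg, ← mul_prod_Ioi_eq_prod_Ici, prod_mul_distrib, sq]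
        ring

theorem prod_Ici_eq_sum_schur {R : Type*} [CommRing R] (x : Fin n → R) :
    ∏ i, ∏ j ∈ Ici i, (1 + x i * x j) = ∑ γ ∈ inCFinset n, schur x γ := by
  let P := MvPolynomial (Fin n) ℤ
  let X : Fin n → P := MvPolynomial.X
  have hK : Function.Injective (algebraMap P (FractionRing P)) := IsFractionRing.injective _ _
  have huniv : ∏ i, ∏ j ∈ Ici i, (1 + X i * X j) = ∑ γ ∈ inCFinset n, schur X γ := by
    apply hK
    simpa [map_sum, map_schur, map_prod] using
      prod_Ici_eq_sum_schur_of_field (x := algebraMap P (FractionRing P) ∘ X)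
        (fun i => (map_ne_zero_iff _ hK).2 (MvPolynomial.X_ne_zero i))
        (hK.comp MvPolynomial.X_injective)
  let evalHom : P →+* R := MvPolynomial.eval₂Hom (Int.castRingHom R) x
  have heval (i : Fin n) : evalHom (X i) = x i := MvPolynomial.eval₂Hom_X' _ _ i
  have heval_comp : evalHom ∘ X = x := funext heval
  simpa only [map_sum, map_schur, map_prod, map_add, map_one, map_mul, heval, heval_comp] using
    congrArg evalHom huniv

end Littlewood

/-- Littlewood's identity: `∏_{i≤j}(1 + x_i x_j) = Σ_{γ ∈ 𝒞} s_γ(x)`, the sum over all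
partitions whose Frobenius arm lengths exceed the leg lengths by exactly 1. -/
theorem littlewood_weak {R : Type*} [CommRing R] {n : ℕ} (hn : 1 ≤ n) (x : Fin n → R) :
    (∏ i : Fin n, ∏ j ∈ Finset.univ.filter (fun j => i ≤ j), (1 + x i * x j)) =
      ∑ᶠ (γ : Partn) (_ : γ.InC), schur x γ := by
  simp only [Finset.filter_le_eq_Ici]
  rw [finsum_inC_schur, prod_Ici_eq_sum_schur]
end

section
/- Let n ≥ 1 and z = (x_1,...,x_n, z_0, y_n^{-1},...,y_1^{-1}) with all parameters nonzero. Define for 1 ≤ k,ℓ ≤ n: f_{k,ℓ}(t) = (u_k t/(1 - x_k t)) · ∏_{i=k+1}^n (1 + y_i t)/(1 - x_i t) · (1 + z_0^{-1} t)/(1 - z_0 t) · ∏_{i=1}^n (1 + x_i^{-1} t)/(1 - y_i^{-1} t), with u_k = z_0 x_k ∏_{i=k+1}^n x_i y_i^{-1}, and g_{k,ℓ}(t) = (t/(1 - y_k^{-1} t)) · ∏_{i=1}^{k-1} (1 + x_i^{-1} t)/(1 - y_i^{-1} t). Set h_{k,ℓ}(q_ℓ) = f_{k,ℓ}(q_ℓ)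 + (-1)^{n-k} g_{k,ℓ}(q_ℓ). Then det_{1≤k,ℓ≤n}(h_{k,ℓ}(q_ℓ)) = Z(z)·K(z,q)·Q(q), where Z(z) = ∏_{i=1}^n x_i^{-(n-i)} · ∏_{i=1}^n (1 + z_0 x_i) · ∏_{1≤i<j≤n}(1 + x_i x_j)(1 + x_i y_j^{-1}), K(z,q) = 1/( ∏_{i=1}^n (1 - q_i z_0) · ∏_{i,j=1}^n (1 - q_j x_i)(1 - q_j y_i^{-1}) ), and Q(q) = ∏_{i=1}^n q_i · ∏_{1≤i<j≤n}(q_i - q_j) · ∏_{1≤i≤j≤n}(1 + q_i q_j). -/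
open Finset

/- Write `v(t) = t⁻¹ - t`, which is invariant under the reflection `t ↦ -t⁻¹`. A product of `m`
factors `ρ(t) = (t + a)(t + b) / t` has the form `A(v(t)) + t B(v(t))` with polynomials `A`, `B`, so
the difference of its values at `t` and `-t⁻¹` is `(t + t⁻¹) B(v(t))`, where `deg B < m`. Up to a
factor depending only on `t`, the entry `h_k(t)` is such a difference with `m = n - k + 1` (in the
indexing from `1`), times `∏_{i < k} (v(t) - v(x_i⁻¹))`. In the Newton basis with nodes `v(x_i⁻¹)`
the matrix of these polynomials in `v` is therefore triangular, and the determinant is the product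
of its diagonal entries times the Vandermonde determinant of the `v(q_l)`. The diagonal entries
give `Z(z)`, and the Vandermonde factors `v(q_j) - v(q_i) = (q_i - q_j)(1 + q_i q_j) / (q_i q_j)`
give `Q(q)`. -/

section NewtonDeterminant

open Polynomial Lagrange

variable {R : Type*} [CommRing R]

lemma nodal_range_add (s : ℕ → R) (k j : ℕ) :
    nodal (range (k + j)) s = nodal (range k) s * nodal (range j) (fun i => s (k + i)) :=
  prod_range_add _ _ _

lemma exists_newton_expansion (m : ℕ) (s : ℕ → R) (p : R[X]) (hp : p.natDegree ≤ m) :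
    ∃ c : ℕ → R, c 0 = p.eval (s 0) ∧ p = ∑ j ∈ range (m + 1), C (c j) * nodal (range j) s := by
  nontriviality R
  induction m generalizing s p with
  | zero =>
    refine ⟨fun _ => p.eval (s 0), rfl, ?_⟩
    rw [eq_C_of_natDegree_le_zero hp]
    simp
  | succ m ih =>
    obtain ⟨c, -, hc⟩ := ih (fun i => s (1 + i)) (p /ₘ (X - C (s 0))) (by
      rw [natDegree_divByMonic _ (monic_X_sub_C _), natDegree_X_sub_C]; omega)
    refine ⟨fun j => Nat.casesOn j (p.eval (s 0)) c, rfl, ?_⟩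
    calc p = C (p.eval (s 0)) + (X - C (s 0)) * (p /ₘ (X - C (s 0))) := by
          rw [← modByMonic_X_sub_C_eq_C_eval, modByMonic_add_div]
      _ = C (p.eval (s 0)) + ∑ j ∈ range (m + 1), C (c j) * nodal (range (1 + j)) s := by
          have nodal_range_one : nodal (range 1) s = X - C (s 0) := prod_range_one _
          conv_lhs => rw [hc, mul_sum]
          simp only [nodal_range_add, nodal_range_one, mul_left_comm]
      _ = _ := by
          rw [sum_range_succ' _ (m + 1), add_comm]
          simp [add_comm]

lemma exists_nodal_mul_newton_expansion (k m : ℕ) (s : ℕ → R) (p : R[X]) (hp : p.natDegree ≤ m) :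
    ∃ c : ℕ → R, c k = p.eval (s k) ∧ (∀ j < k, c j = 0) ∧
      nodal (range k) s * p = ∑ j ∈ range (k + (m + 1)), C (c j) * nodal (range j) s := by
  obtain ⟨c, hc₀, hc⟩ := exists_newton_expansion m (fun i => s (k + i)) p hp
  have shifted_of_lt {j : ℕ} (hj : j < k) : (if k ≤ j then c (j - k) else 0) = 0 :=
    if_neg (not_le.mpr hj)
  refine ⟨fun j => if k ≤ j then c (j - k) else 0, by simp [hc₀], fun j => shifted_of_lt, ?_⟩
  have low_terms :
      ∑ j ∈ range k, C (if k ≤ j then c (j - k) else 0) * nodal (range j) s = 0 :=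
    sum_eq_zero fun j hj => by rw [shifted_of_lt (mem_range.mp hj), C_0, zero_mul]
  rw [sum_range_add, low_terms, zero_add]
  conv_lhs => rw [hc, mul_sum]
  simp [nodal_range_add, mul_left_comm]

lemma det_eval_nodal_eq_det_vandermonde {n : ℕ} (s : ℕ → R) (v : Fin n → R) :
    (Matrix.of fun k l : Fin n => (nodal (range k) s).eval (v l)).det
      = (Matrix.vandermonde v).det := by
  nontriviality R
  rw [Matrix.det_eval_matrixOfPolynomials_eq_det_vandermonde v
    (fun k => nodal (range k) s) (fun k => by simp [natDegree_nodal]) (fun k => nodal_monic),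
    ← Matrix.det_transpose]
  rfl

lemma det_nodal_range_mul_eval {n : ℕ} (s : ℕ → R) (v : Fin n → R) (S : Fin n → R[X])
    (hS : ∀ k, (S k).natDegree ≤ n - 1 - k) :
    (Matrix.of fun k l : Fin n => (nodal (range k) s * S k).eval (v l)).det
      = (∏ k, (S k).eval (s k)) * (Matrix.vandermonde v).det := by
  choose c hc_diag hc_lower hc using fun k : Fin n =>
    exists_nodal_mul_newton_expansion k (n - 1 - k) s (S k) (hS k)
  let M : Matrix (Fin n) (Fin n) R := Matrix.of fun k j => c k j
  have hM : M.det = ∏ k, (S k).eval (s k) := by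
    have hM_upper : M.IsUpperTriangular := fun k j hjk => hc_lower k j hjk
    rw [Matrix.det_of_isUpperTriangular hM_upper]
    exact prod_congr rfl fun k _ => hc_diag k
  have expand (k : Fin n) :
      nodal (range k) s * S k = ∑ j : Fin n, C (M k j) * nodal (range j) s := by
    rw [hc, show (k : ℕ) + (n - 1 - k + 1) = n by omega, sum_range]
    rfl
  rw [← hM, ← det_eval_nodal_eq_det_vandermonde s v, ← Matrix.det_mul]
  congr 1
  ext k l
  simp [expand, eval_finsetSum, Matrix.mul_apply]

lemma det_nodal_Iio_mul_eval {n : ℕ} (s v : Fin n → R) (S : Fin n → R[X])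
    (hS : ∀ k, (S k).natDegree ≤ #(Ioi k)) :
    (Matrix.of fun k l => (nodal (Iio k) s * S k).eval (v l)).det
      = (∏ k, (S k).eval (s k)) * ∏ i, ∏ j ∈ Ioi i, (v j - v i) := by
  have extend_val (i : Fin n) : Function.extend Fin.val s 0 i = s i :=
    Fin.val_injective.extend_apply s 0 i
  have nodal_Iio (k : Fin n) :
      nodal (Iio k) s = nodal (range k) (Function.extend Fin.val s 0) := by
    rw [← Nat.Iio_eq_range, ← Fin.map_valEmbedding_Iio, nodal, nodal, prod_map]
    simp only [Fin.valEmbedding_apply, extend_val]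
  simp only [nodal_Iio]
  rw [det_nodal_range_mul_eval _ v S (by simpa using hS), Matrix.det_vandermonde]
  simp only [extend_val]

end NewtonDeterminant

section Reflection

open Polynomial

variable {K ι : Type*} [Field K]

/-- The function `v(t) = t⁻¹ - t`, which generates the rational functions of `t` that are invariant
under `t ↦ -t⁻¹`. -/
def invSubSelf (t : K) : K := t⁻¹ - t

lemma invSubSelf_neg_inv (t : K) : invSubSelf (-t⁻¹) = invSubSelf t := by
  simp only [invSubSelf, inv_neg, inv_inv]
  ring

lemma invSubSelf_sub_invSubSelf {a b : K} (ha : a ≠ 0) (hb : b ≠ 0) :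
    invSubSelf b - invSubSelf a = (a - b) * (1 + a * b) / (a * b) := by
  simp only [invSubSelf]
  field_simp
  ring

/-- The quadratic factor `ρ(t) = (t + a)(t + b) / t`, normalized so that it is affine in `t` over
the polynomials in `t⁻¹ - t`. -/
def quadRatio (a b t : K) : K := (t + a) * (t + b) / t

lemma quadRatio_neg_inv (a b : K) {t : K} (ht : t ≠ 0) :
    quadRatio a b (-t⁻¹) = -((1 - a * t) * (1 - b * t) / t) := by
  simp only [quadRatio]
  field_simp
  ring

lemma pow_card_mul_prod_quadRatio (T : Finset ι) (d e : ι → K) {t : K} (ht : t ≠ 0) :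
    t ^ #T * ∏ i ∈ T, quadRatio (d i) (e i) t = ∏ i ∈ T, (t + d i) * (t + e i) := by
  rw [← prod_const, ← prod_mul_distrib]
  exact prod_congr rfl fun i _ => mul_div_cancel₀ _ ht

lemma neg_pow_card_mul_prod_quadRatio_neg_inv (T : Finset ι) (d e : ι → K) {t : K} (ht : t ≠ 0) :
    (-t) ^ #T * ∏ i ∈ T, quadRatio (d i) (e i) (-t⁻¹)
      = ∏ i ∈ T, (1 - d i * t) * (1 - e i * t) := by
  rw [← prod_const, ← prod_mul_distrib]
  refine prod_congr rfl fun i _ => ?_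
  rw [quadRatio_neg_inv _ _ ht, neg_mul_neg, mul_div_cancel₀ _ ht]

lemma quadRatio_mul_add_mul (a b A B : K) {t : K} (ht : t ≠ 0) :
    quadRatio a b t * (A + t * B)
      = ((a + b + a * b * invSubSelf t) * A + (1 + a * b) * B)
        + t * ((1 + a * b) * A + (a + b - invSubSelf t) * B) := by
  simp only [quadRatio, invSubSelf]
  field_simp
  ring

lemma degree_smul_add_C_sub_X_mul_le {A B : K[X]} {m : ℕ} (hA : A.degree ≤ m)
    (hB : B.degree < m) (a b : K) : (a • A + (C b - X) * B : K[X]).degree ≤ m := by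
  refine degree_add_le_of_degree_le ((degree_smul_le _ _).trans hA) ?_
  calc ((C b - X) * B).degree ≤ (C b - X).degree + B.degree := degree_mul_le _ _
    _ = B.degree + 1 := by rw [← neg_sub X (C b), degree_neg, degree_X_sub_C, add_comm]
    _ ≤ m := Nat.WithBot.add_one_le_of_lt hB

lemma exists_prod_quadRatio_eq_add_mul (T : Finset ι) (d e : ι → K) :
    ∃ A B : K[X], A.degree ≤ #T ∧ B.degree < #T ∧ ∀ t ≠ 0,
      ∏ i ∈ T, quadRatio (d i) (e i) t = A.eval (invSubSelf t) + t * B.eval (invSubSelf t) := by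
  induction T using Finset.cons_induction with
  | empty => exact ⟨1, 0, by simp, by simp, by simp⟩
  | cons i T hi ih =>
    obtain ⟨A, B, hA, hB, hAB⟩ := ih
    refine ⟨(C (d i + e i) + C (d i * e i) * X) * A + (1 + d i * e i) • B,
      (1 + d i * e i) • A + (C (d i + e i) - X) * B, ?_, ?_, fun t ht => ?_⟩
    · rw [card_cons]
      refine degree_add_le_of_degree_le ?_ ?_
      · rw [Nat.add_comm, Nat.cast_add]
        refine degree_mul_le_of_le ?_ hA
        exact degree_add_le_of_degree_le (degree_C_le.trans zero_le_one) (degree_C_mul_X_le _)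
      · exact (degree_smul_le _ _).trans (hB.le.trans (by exact_mod_cast Nat.le_succ _))
    · rw [card_cons]
      exact (degree_smul_add_C_sub_X_mul_le hA hB _ _).trans_lt
        (Nat.cast_lt.mpr (Nat.lt_succ_self _))
    · rw [prod_cons, hAB t ht, quadRatio_mul_add_mul _ _ _ _ ht]
      simp

lemma exists_quadRatio_mul_prod_sub_reflection (T : Finset ι) (d e : ι → K) {a : K} (ha : a ≠ 0)
    (b : K) :
    ∃ S : K[X], S.natDegree ≤ #T ∧
      S.eval (invSubSelf a⁻¹) = (1 + a * b) * ∏ i ∈ T, quadRatio (d i) (e i) a⁻¹ ∧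
      ∀ t ≠ 0, quadRatio a b t * ∏ i ∈ T, quadRatio (d i) (e i) t
          - quadRatio a b (-t⁻¹) * ∏ i ∈ T, quadRatio (d i) (e i) (-t⁻¹)
        = (t + t⁻¹) * S.eval (invSubSelf t) := by
  obtain ⟨A, B, hA, hB, hAB⟩ := exists_prod_quadRatio_eq_add_mul T d e
  refine ⟨(1 + a * b) • A + (C (a + b) - X) * B,
    natDegree_le_of_degree_le (degree_smul_add_C_sub_X_mul_le hA hB _ _), ?_, fun t ht => ?_⟩
  · -- Dividing the reflection identity at `t = a⁻¹` by `a + a⁻¹` would lose the case `a ^ 2 = -1`.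
    have coeff_at_node : a + b - invSubSelf a⁻¹ = (1 + a * b) * a⁻¹ := by
      simp only [invSubSelf]
      field_simp
      ring
    simp only [eval_add, eval_smul, smul_eq_mul, eval_mul, eval_sub, eval_C, eval_X]
    rw [hAB _ (inv_ne_zero ha), coeff_at_node]
    ring
  · have ht' : -t⁻¹ ≠ 0 := neg_ne_zero.mpr (inv_ne_zero ht)
    rw [hAB t ht, hAB _ ht', quadRatio_mul_add_mul _ _ _ _ ht, quadRatio_mul_add_mul _ _ _ _ ht',
      invSubSelf_neg_inv]
    simp only [eval_add, eval_smul, smul_eq_mul, eval_mul, eval_sub, eval_C, eval_X]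
    ring

end Reflection

section Entries

open Lagrange

lemma prod_eq_prod_Iio_mul_mul_prod_Ioi {ι M : Type*} [Fintype ι] [LinearOrder ι]
    [LocallyFiniteOrderTop ι] [LocallyFiniteOrderBot ι] [CommMonoid M] (f : ι → M) (k : ι) :
    ∏ i, f i = (∏ i ∈ Iio k, f i) * f k * ∏ i ∈ Ioi k, f i := by
  rw [Fintype.prod_eq_mul_prod_compl k, ← Ioi_disjUnion_Iio, prod_disjUnion]
  ac_rfl

variable {K : Type*} [Field K] {n : ℕ}

/-- The entry `f_{k,ℓ}(t)` of the paper, with `u_k` expanded; it does not depend on `ℓ`. -/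
def fEntry (x y : Fin n → K) (z0 : K) (k : Fin n) (t : K) : K :=
  z0 * x k * (∏ i ∈ Ioi k, (x i * (y i)⁻¹)) * t / (1 - x k * t) *
    (∏ i ∈ Ioi k, ((1 + y i * t) / (1 - x i * t))) *
    ((1 + z0⁻¹ * t) / (1 - z0 * t)) *
    (∏ i : Fin n, ((1 + (x i)⁻¹ * t) / (1 - (y i)⁻¹ * t)))

/-- The entry `g_{k,ℓ}(t)` of the paper, which does not depend on `ℓ`. -/
def gEntry (x y : Fin n → K) (k : Fin n) (t : K) : K :=
  t / (1 - (y k)⁻¹ * t) * (∏ i ∈ Iio k, ((1 + (x i)⁻¹ * t) / (1 - (y i)⁻¹ * t)))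

/-- The common denominator of the entries `f_{k,ℓ}(t)` and `g_{k,ℓ}(t)` for all `k`; its values at
the `q_ℓ` multiply to `K(z,q)⁻¹`. -/
def entryDenom (x y : Fin n → K) (z0 t : K) : K :=
  (1 - z0 * t) * ∏ i, (1 - x i * t) * (1 - (y i)⁻¹ * t)

lemma entryDenom_ne_zero {x y : Fin n → K} {z0 t : K} (hxt : ∀ i, 1 - x i * t ≠ 0)
    (hyt : ∀ i, 1 - (y i)⁻¹ * t ≠ 0) (hzt : 1 - z0 * t ≠ 0) : entryDenom x y z0 t ≠ 0 :=
  mul_ne_zero hzt (prod_ne_zero_iff.mpr fun i _ => mul_ne_zero (hxt i) (hyt i))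

lemma fEntry_eq_div {x y : Fin n → K} {z0 t : K} (hx : ∀ i, x i ≠ 0) (hy : ∀ i, y i ≠ 0)
    (hz0 : z0 ≠ 0) (hxt : ∀ i, 1 - x i * t ≠ 0) (hyt : ∀ i, 1 - (y i)⁻¹ * t ≠ 0)
    (hzt : 1 - z0 * t ≠ 0) (k : Fin n) :
    fEntry x y z0 k t
      = t * (∏ i ∈ Iio k, (1 - x i * t) * (1 + (x i)⁻¹ * t)) *
          ((t + x k) * (t + z0) * ∏ i ∈ Ioi k, (t + x i) * (t + (y i)⁻¹)) /
        entryDenom x y z0 t := by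
  have factor_z : (1 - z0 * t) * (z0 * ((1 + z0⁻¹ * t) / (1 - z0 * t))) = t + z0 := by
    field_simp
    ring
  have factor_lt (i : Fin n) : (1 - x i * t) * (1 - (y i)⁻¹ * t) *
      ((1 + (x i)⁻¹ * t) / (1 - (y i)⁻¹ * t)) = (1 - x i * t) * (1 + (x i)⁻¹ * t) := by
    rw [mul_assoc, mul_div_cancel₀ _ (hyt i)]
  have factor_eq : (1 - x k * t) * (1 + (x k)⁻¹ * t) * (x k / (1 - x k * t)) = t + x k := by
    have := hx k
    have := hxt k
    field_simp
    ring
  have factor_gt (i : Fin n) : (1 - x i * t) * (1 + (x i)⁻¹ * t) *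
      (x i * (y i)⁻¹ * ((1 + y i * t) / (1 - x i * t))) = (t + x i) * (t + (y i)⁻¹) := by
    have := hx i
    have := hy i
    have := hxt i
    field_simp
    ring
  rw [eq_div_iff (entryDenom_ne_zero hxt hyt hzt)]
  calc fEntry x y z0 k t * entryDenom x y z0 t
      = t * ((1 - z0 * t) * (z0 * ((1 + z0⁻¹ * t) / (1 - z0 * t)))) * (x k / (1 - x k * t)) *
          (∏ i ∈ Ioi k, x i * (y i)⁻¹ * ((1 + y i * t) / (1 - x i * t))) *
          ∏ i, (1 - x i * t) * (1 - (y i)⁻¹ * t) * ((1 + (x i)⁻¹ * t) / (1 - (y i)⁻¹ * t)) := by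
        simp only [fEntry, entryDenom, prod_mul_distrib]
        ring
    _ = t * (t + z0) * (∏ i ∈ Iio k, (1 - x i * t) * (1 + (x i)⁻¹ * t)) *
          ((1 - x k * t) * (1 + (x k)⁻¹ * t) * (x k / (1 - x k * t))) *
          ∏ i ∈ Ioi k, (1 - x i * t) * (1 + (x i)⁻¹ * t) *
            (x i * (y i)⁻¹ * ((1 + y i * t) / (1 - x i * t))) := by
        rw [factor_z, prod_congr rfl fun i _ => factor_lt i,
          prod_eq_prod_Iio_mul_mul_prod_Ioi _ k]
        simp only [prod_mul_distrib]
        ring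
    _ = _ := by
        rw [factor_eq, prod_congr rfl fun i _ => factor_gt i]
        ring

lemma gEntry_eq_div {x y : Fin n → K} {z0 t : K} (hxt : ∀ i, 1 - x i * t ≠ 0)
    (hyt : ∀ i, 1 - (y i)⁻¹ * t ≠ 0) (hzt : 1 - z0 * t ≠ 0) (k : Fin n) :
    gEntry x y k t
      = t * (∏ i ∈ Iio k, (1 - x i * t) * (1 + (x i)⁻¹ * t)) *
          ((1 - x k * t) * (1 - z0 * t) * ∏ i ∈ Ioi k, (1 - x i * t) * (1 - (y i)⁻¹ * t)) /
        entryDenom x y z0 t := by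
  have factor_lt (i : Fin n) : (1 + (x i)⁻¹ * t) / (1 - (y i)⁻¹ * t) *
      ((1 - x i * t) * (1 - (y i)⁻¹ * t)) = (1 - x i * t) * (1 + (x i)⁻¹ * t) := by
    rw [mul_comm, mul_assoc, mul_div_cancel₀ _ (hyt i)]
  have factor_eq : t / (1 - (y k)⁻¹ * t) * ((1 - x k * t) * (1 - (y k)⁻¹ * t))
      = t * (1 - x k * t) := by
    rw [mul_left_comm, div_mul_cancel₀ _ (hyt k), mul_comm]
  rw [eq_div_iff (entryDenom_ne_zero hxt hyt hzt)]
  calc gEntry x y k t * entryDenom x y z0 t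
      = (1 - z0 * t) * (t / (1 - (y k)⁻¹ * t) * ((1 - x k * t) * (1 - (y k)⁻¹ * t))) *
          (∏ i ∈ Iio k, (1 + (x i)⁻¹ * t) / (1 - (y i)⁻¹ * t) *
            ((1 - x i * t) * (1 - (y i)⁻¹ * t))) *
          ∏ i ∈ Ioi k, (1 - x i * t) * (1 - (y i)⁻¹ * t) := by
        rw [entryDenom, prod_eq_prod_Iio_mul_mul_prod_Ioi _ k]
        simp only [gEntry, prod_mul_distrib]
        ring
    _ = _ := by
        rw [factor_eq, prod_congr rfl fun i _ => factor_lt i]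
        ring

lemma prod_Iio_eq_pow_mul_eval_nodal {x : Fin n → K} {t : K} (hx : ∀ i, x i ≠ 0) (ht : t ≠ 0)
    (k : Fin n) :
    ∏ i ∈ Iio k, (1 - x i * t) * (1 + (x i)⁻¹ * t)
      = t ^ #(Iio k) * (nodal (Iio k) fun i => invSubSelf (x i)⁻¹).eval (invSubSelf t) := by
  rw [eval_nodal, ← prod_const, ← prod_mul_distrib]
  refine prod_congr rfl fun i _ => ?_
  have := hx i
  rw [invSubSelf_sub_invSubSelf (inv_ne_zero this) ht]
  field_simp

lemma fEntry_add_gEntry_eq_div {x y : Fin n → K} {z0 t : K} (hx : ∀ i, x i ≠ 0)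
    (hy : ∀ i, y i ≠ 0) (hz0 : z0 ≠ 0) (ht : t ≠ 0) (hxt : ∀ i, 1 - x i * t ≠ 0)
    (hyt : ∀ i, 1 - (y i)⁻¹ * t ≠ 0) (hzt : 1 - z0 * t ≠ 0) (k : Fin n) :
    fEntry x y z0 k t + (-1) ^ #(Ioi k) * gEntry x y k t
      = t ^ (#(Ioi k) + 2) * (∏ i ∈ Iio k, (1 - x i * t) * (1 + (x i)⁻¹ * t)) *
          (quadRatio (x k) z0 t * ∏ i ∈ Ioi k, quadRatio (x i) (y i)⁻¹ t
            - quadRatio (x k) z0 (-t⁻¹) * ∏ i ∈ Ioi k, quadRatio (x i) (y i)⁻¹ (-t⁻¹)) /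
        entryDenom x y z0 t := by
  have at_t : (t + x k) * (t + z0) = t * quadRatio (x k) z0 t := (mul_div_cancel₀ _ ht).symm
  have at_reflection : (1 - x k * t) * (1 - z0 * t) = -t * quadRatio (x k) z0 (-t⁻¹) := by
    rw [quadRatio_neg_inv _ _ ht, neg_mul_neg, mul_div_cancel₀ _ ht]
  have sign_cancel : (-1 : K) ^ #(Ioi k) * (-t) ^ #(Ioi k) = t ^ #(Ioi k) := by
    rw [← mul_pow, neg_one_mul, neg_neg]
  rw [fEntry_eq_div hx hy hz0 hxt hyt hzt, gEntry_eq_div hxt hyt hzt, at_t, at_reflection,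
    ← pow_card_mul_prod_quadRatio _ _ _ ht, ← neg_pow_card_mul_prod_quadRatio_neg_inv _ _ _ ht]
  linear_combination (-t ^ 2 * (∏ i ∈ Iio k, (1 - x i * t) * (1 + (x i)⁻¹ * t)) *
    quadRatio (x k) z0 (-t⁻¹) * (∏ i ∈ Ioi k, quadRatio (x i) (y i)⁻¹ (-t⁻¹)) /
    entryDenom x y z0 t) * sign_cancel

open Polynomial in
lemma exists_fEntry_add_gEntry_eq_eval (x y : Fin n → K) {z0 : K} (hx : ∀ i, x i ≠ 0)
    (hy : ∀ i, y i ≠ 0) (hz0 : z0 ≠ 0) (k : Fin n) :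
    ∃ S : K[X], S.natDegree ≤ #(Ioi k) ∧
      S.eval (invSubSelf (x k)⁻¹)
        = (1 + x k * z0) * ∏ i ∈ Ioi k, quadRatio (x i) (y i)⁻¹ (x k)⁻¹ ∧
      ∀ t ≠ 0, (∀ i, 1 - x i * t ≠ 0) → (∀ i, 1 - (y i)⁻¹ * t ≠ 0) → 1 - z0 * t ≠ 0 →
        fEntry x y z0 k t + (-1) ^ #(Ioi k) * gEntry x y k t
          = t ^ n * (1 + t ^ 2) / entryDenom x y z0 t *
            (nodal (Iio k) (fun i => invSubSelf (x i)⁻¹) * S).eval (invSubSelf t) := by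
  obtain ⟨S, hdeg, hnode, hS⟩ :=
    exists_quadRatio_mul_prod_sub_reflection (Ioi k) x (fun i => (y i)⁻¹) (hx k) z0
  refine ⟨S, hdeg, hnode, fun t ht hxt hyt hzt => ?_⟩
  have hpow : t ^ n * (1 + t ^ 2) = t ^ (#(Ioi k) + 2) * t ^ #(Iio k) * (t + t⁻¹) := by
    have hn : n = #(Ioi k) + 1 + #(Iio k) := by
      rw [Fin.card_Ioi, Fin.card_Iio]
      omega
    conv_lhs => rw [hn, pow_add]
    field_simp
    ring
  rw [fEntry_add_gEntry_eq_div hx hy hz0 ht hxt hyt hzt, hS t ht,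
    prod_Iio_eq_pow_mul_eval_nodal hx ht, hpow, eval_mul]
  ring

lemma det_fEntry_add_gEntry {x y q : Fin n → K} {z0 : K} (hx : ∀ i, x i ≠ 0)
    (hy : ∀ i, y i ≠ 0) (hq : ∀ i, q i ≠ 0) (hz0 : z0 ≠ 0) (hxq : ∀ i j, 1 - x i * q j ≠ 0)
    (hyq : ∀ i j, 1 - (y i)⁻¹ * q j ≠ 0) (hzq : ∀ j, 1 - z0 * q j ≠ 0) :
    (Matrix.of fun k l =>
        fEntry x y z0 k (q l) + (-1) ^ #(Ioi k) * gEntry x y k (q l)).det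
      = (∏ l, q l ^ n * (1 + q l ^ 2) / entryDenom x y z0 (q l)) *
        ((∏ k, (1 + x k * z0) * ∏ i ∈ Ioi k, quadRatio (x i) (y i)⁻¹ (x k)⁻¹) *
          ∏ i, ∏ j ∈ Ioi i, (invSubSelf (q j) - invSubSelf (q i))) := by
  choose S hdeg hnode hS using exists_fEntry_add_gEntry_eq_eval x y hx hy hz0
  simp only [fun k l => hS k (q l) (hq l) (hxq · l) (hyq · l) (hzq l), ← hnode]
  rw [← det_nodal_Iio_mul_eval _ _ S hdeg]
  exact Matrix.det_mul_row _ _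

end Entries

section Evaluation

variable {K : Type*} [Field K] {n : ℕ}

lemma prod_one_add_mul_prod_quadRatio_inv {x : Fin n → K} (hx : ∀ i, x i ≠ 0) (y : Fin n → K)
    (z0 : K) :
    ∏ k, (1 + x k * z0) * ∏ i ∈ Ioi k, quadRatio (x i) (y i)⁻¹ (x k)⁻¹
      = (∏ i, (x i)⁻¹ ^ #(Ioi i)) * (∏ i, (1 + z0 * x i)) *
        ∏ i, ∏ j ∈ Ioi i, (1 + x i * x j) * (1 + x i * (y j)⁻¹) := by
  have quadRatio_inv (k i : Fin n) : quadRatio (x i) (y i)⁻¹ (x k)⁻¹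
      = (x k)⁻¹ * ((1 + x k * x i) * (1 + x k * (y i)⁻¹)) := by
    have := hx k
    simp only [quadRatio]
    field_simp
  simp only [quadRatio_inv, prod_mul_distrib, prod_const, mul_comm z0]
  ring

lemma prod_prod_Ioi_mul_self {ι M : Type*} [Fintype ι] [LinearOrder ι]
    [LocallyFiniteOrderTop ι] [LocallyFiniteOrderBot ι] [CommMonoid M] (a : ι → M) :
    ∏ i, ∏ j ∈ Ioi i, a i * a j = ∏ i, a i ^ (Fintype.card ι - 1) := by
  rw [prod_prod_Ioi_mul_eq_prod_prod_off_diag fun _ i => a i]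
  simp only [prod_const, card_compl, card_singleton]

lemma prod_pow_mul_prod_invSubSelf_sub {q : Fin n → K} (hq : ∀ i, q i ≠ 0) :
    (∏ l, q l ^ n) * ∏ i, ∏ j ∈ Ioi i, (invSubSelf (q j) - invSubSelf (q i))
      = (∏ i, q i) * (∏ i, ∏ j ∈ Ioi i, (q i - q j)) * ∏ i, ∏ j ∈ Ioi i, (1 + q i * q j) := by
  simp only [invSubSelf_sub_invSubSelf (hq _) (hq _), prod_div_distrib,
    prod_mul_distrib (f := fun j => q _ - q j),
    prod_mul_distrib (f := fun i => ∏ j ∈ Ioi i, (q i - q j))]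
  rw [prod_prod_Ioi_mul_self, Fintype.card_fin]
  have hne : ∏ i, q i ^ (n - 1) ≠ 0 := prod_ne_zero_iff.mpr fun i _ => pow_ne_zero _ (hq i)
  have hpow : ∏ i, q i ^ n = (∏ i, q i) * ∏ i, q i ^ (n - 1) := by
    rw [← prod_mul_distrib]
    refine prod_congr rfl fun i _ => ?_
    rw [← pow_succ', Nat.sub_add_cancel i.pos]
  rw [hpow]
  field_simp

lemma prod_entryDenom (x y q : Fin n → K) (z0 : K) :
    ∏ l, entryDenom x y z0 (q l)
      = (∏ i, (1 - q i * z0)) * ∏ i, ∏ j, (1 - q j * x i) * (1 - q j * (y i)⁻¹) := by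
  simp only [entryDenom]
  rw [prod_mul_distrib, prod_comm]
  simp only [mul_comm (q _)]

lemma prod_prod_Ici_one_add_mul (q : Fin n → K) :
    ∏ i, ∏ j ∈ Ici i, (1 + q i * q j)
      = (∏ i, (1 + q i ^ 2)) * ∏ i, ∏ j ∈ Ioi i, (1 + q i * q j) := by
  simp only [← mul_prod_Ioi_eq_prod_Ici, prod_mul_distrib, sq]

end Evaluation

/-- Theorem 6.1 / Lemma 6.2 combined: `det(h_{k,ℓ}(q_ℓ)) = Z(z) K(z,q) Q(q)` with
`h_{k,ℓ} = f_{k,ℓ} + (-1)^{n-k} g_{k,ℓ}`.  Indices are 0-indexed: `k : Fin n` has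
1-indexed value `k+1`, so `∏_{i=k+1}^n` becomes a product over `k < i`,
`∏_{i=1}^{k-1}` over `i < k`, the sign `(-1)^{n-k}` becomes `(-1)^{n-1-k}`, and
`x_i^{-(n-i)}` becomes `(x i)⁻¹ ^ (n-1-i)`.  The hypotheses make every denominator
appearing on either side nonzero. -/
theorem det_h_eq_ZKQ {K : Type*} [Field K] {n : ℕ} (hn : 1 ≤ n)
    (x y q : Fin n → K) (z0 : K)
    (hx : ∀ i, x i ≠ 0) (hy : ∀ i, y i ≠ 0) (hq : ∀ i, q i ≠ 0) (hz0 : z0 ≠ 0)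
    (hxq : ∀ i j, 1 - x i * q j ≠ 0) (hyq : ∀ i j, 1 - (y i)⁻¹ * q j ≠ 0)
    (hzq : ∀ j, 1 - z0 * q j ≠ 0) :
    let u : Fin n → K := fun k =>
      z0 * x k * ∏ i ∈ Finset.univ.filter (fun i => k < i), (x i * (y i)⁻¹)
    let f : Fin n → K → K := fun k t =>
      u k * t / (1 - x k * t) *
        (∏ i ∈ Finset.univ.filter (fun i => k < i), ((1 + y i * t) / (1 - x i * t))) *
        ((1 + z0⁻¹ * t) / (1 - z0 * t)) *
        (∏ i : Fin n, ((1 + (x i)⁻¹ * t) / (1 - (y i)⁻¹ * t)))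
    let g : Fin n → K → K := fun k t =>
      t / (1 - (y k)⁻¹ * t) *
        (∏ i ∈ Finset.univ.filter (fun i => i < k), ((1 + (x i)⁻¹ * t) / (1 - (y i)⁻¹ * t)))
    Matrix.det (Matrix.of fun k l : Fin n =>
        f k (q l) + (-1 : K) ^ (n - 1 - (k : ℕ)) * g k (q l)) =
      ((∏ i : Fin n, (x i)⁻¹ ^ (n - 1 - (i : ℕ))) *
        (∏ i : Fin n, (1 + z0 * x i)) *
        (∏ i : Fin n, ∏ j ∈ Finset.univ.filter (fun j => i < j),
          ((1 + x i * x j) * (1 + x i * (y j)⁻¹)))) *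
      ((∏ i : Fin n, (1 - q i * z0)) *
        ∏ i : Fin n, ∏ j : Fin n, ((1 - q j * x i) * (1 - q j * (y i)⁻¹)))⁻¹ *
      ((∏ i : Fin n, q i) *
        (∏ i : Fin n, ∏ j ∈ Finset.univ.filter (fun j => i < j), (q i - q j)) *
        (∏ i : Fin n, ∏ j ∈ Finset.univ.filter (fun j => i ≤ j), (1 + q i * q j))) := by
  simp only [filter_lt_eq_Ioi, filter_gt_eq_Iio, filter_le_eq_Ici, ← Fin.card_Ioi]
  refine (det_fEntry_add_gEntry hx hy hq hz0 hxq hyq hzq).trans ?_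
  rw [prod_one_add_mul_prod_quadRatio_inv hx, ← prod_entryDenom, prod_prod_Ici_one_add_mul,
    prod_div_distrib, prod_mul_distrib]
  linear_combination ((∏ i, (x i)⁻¹ ^ #(Ioi i)) * (∏ i, (1 + z0 * x i)) *
    (∏ i, ∏ j ∈ Ioi i, (1 + x i * x j) * (1 + x i * (y j)⁻¹)) *
    (∏ l, entryDenom x y z0 (q l))⁻¹ * ∏ i, (1 + q i ^ 2)) * prod_pow_mul_prod_invSubSelf_sub hq
end
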